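/- Let L be a completely distributive commutative subspace lattice on a complex separable Hilbert space H and let Φ : Alg L → Alg L be a linear map that is continuous with respect to the weak operator topology and rank preserving, and such that every element of F is consistent with respect to Φ. Assume further that F = 𝔊_N for some N ∈ F (i.e., Alg L is irreducible). Then there exist densely defined linear transformations U and V on H such that Φ(A) = U A V* for all A ∈ Alg L, in the sense that: (i) Φ(x⊗f*) = (Ux)⊗(Vf)* whenever x ∈ dom U, f ∈ dom V, and x ∈ M, f ∈ M₋^⊥ for some M ∈ F; and (ii) ⟨Φ(A)h, k⟩ = ⟨A(V*h), U*k⟩ for every A ∈ Alg L, every h in the domain of V*, and every k in the domain of U*. -/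

import Mathlib

open scoped InnerProductSpace

noncomputable section

/-- The join (closed linear span) of a family of subspaces of a Hilbert space. -/
def closedJoin {H : Type*} [NormedAddCommGroup H] [InnerProductSpace ℂ H]
    (S : Set (Submodule ℂ H)) : Submodule ℂ H :=
  (sSup S).topologicalClosure

/-- A subspace lattice on `H`: a family of closed subspaces containing `{0}` and `H`,
closed under arbitrary intersections and arbitrary closed linear spans. -/
structure IsSubspaceLattice {H : Type*} [NormedAddCommGroup H] [InnerProductSpace ℂ H]
    (L : Set (Submodule ℂ H)) : Prop where
  isClosed : ∀ E ∈ L, IsClosed (E : Set H)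
  bot_mem : ⊥ ∈ L
  top_mem : ⊤ ∈ L
  sInf_mem : ∀ S : Set (Submodule ℂ H), S ⊆ L → sInf S ∈ L
  join_mem : ∀ S : Set (Submodule ℂ H), S ⊆ L → closedJoin S ∈ L

/-- `M₋`: the join of all members of `L` that do not contain `M`. -/
def minus {H : Type*} [NormedAddCommGroup H] [InnerProductSpace ℂ H]
    (L : Set (Submodule ℂ H)) (M : Submodule ℂ H) : Submodule ℂ H :=
  closedJoin {E | E ∈ L ∧ ¬ M ≤ E}

open Classical in
/-- The orthogonal projection of `H` onto a closed subspace `E`, as an operator on `H`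
(junk value `0` if `E` is not closed). -/
def projOf {H : Type*} [NormedAddCommGroup H] [InnerProductSpace ℂ H] [CompleteSpace H]
    (E : Submodule ℂ H) : H →L[ℂ] H :=
  if h : IsClosed (E : Set H) then
    haveI : CompleteSpace E := h.completeSpace_coe
    E.subtypeL.comp E.orthogonalProjectionOnto
  else 0

/-- A commutative subspace lattice: the orthogonal projections onto members commute. -/
structure IsCSL {H : Type*} [NormedAddCommGroup H] [InnerProductSpace ℂ H] [CompleteSpace H]
    (L : Set (Submodule ℂ H)) extends IsSubspaceLattice L : Prop where
  commutes : ∀ E ∈ L, ∀ F ∈ L, projOf E * projOf F = projOf F * projOf E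

/-- Complete distributivity of the lattice `L` (meets are intersections, joins are
closed linear spans). -/
def IsCompletelyDistributive {H : Type*} [NormedAddCommGroup H] [InnerProductSpace ℂ H]
    (L : Set (Submodule ℂ H)) : Prop :=
  ∀ (I : Type) (J : I → Type) (E : (i : I) → J i → Submodule ℂ H),
    (∀ i j, E i j ∈ L) →
     ((⨅ i, closedJoin (Set.range (E i)))
        = closedJoin (Set.range fun φ : (∀ i, J i) => ⨅ i, E i (φ i)))
    ∧ (closedJoin (Set.range fun i => ⨅ j, E i j)
        = ⨅ φ : (∀ i, J i), closedJoin (Set.range fun i => E i (φ i)))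

/-- `Alg L`: all bounded operators leaving every member of `L` invariant. -/
def algL {H : Type*} [NormedAddCommGroup H] [InnerProductSpace ℂ H]
    (L : Set (Submodule ℂ H)) : Set (H →L[ℂ] H) :=
  {T | ∀ E ∈ L, ∀ x ∈ E, T x ∈ E}

/-- The rank one operator `x ⊗ f* : h ↦ ⟨h, f⟩ x`. -/
def rankOne {H : Type*} [NormedAddCommGroup H] [InnerProductSpace ℂ H]
    (x f : H) : H →L[ℂ] H :=
  (innerSL ℂ f).smulRight x

/-- The rank of a bounded operator: the dimension of its range. -/
def opRank {H : Type*} [NormedAddCommGroup H] [InnerProductSpace ℂ H]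
    (T : H →L[ℂ] H) : Cardinal :=
  Module.rank ℂ (LinearMap.range (T : H →ₗ[ℂ] H))

/-- `Φ` is a linear map of `Alg L` into itself. -/
structure IsLinearOnAlg {H : Type*} [NormedAddCommGroup H] [InnerProductSpace ℂ H]
    (L : Set (Submodule ℂ H)) (Φ : (H →L[ℂ] H) → (H →L[ℂ] H)) : Prop where
  maps : ∀ A ∈ algL L, Φ A ∈ algL L
  map_add : ∀ A ∈ algL L, ∀ B ∈ algL L, Φ (A + B) = Φ A + Φ B
  map_smul : ∀ (c : ℂ), ∀ A ∈ algL L, Φ (c • A) = c • Φ A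

/-- `Φ` preserves the rank of every finite rank operator in `Alg L`. -/
def RankPreserving {H : Type*} [NormedAddCommGroup H] [InnerProductSpace ℂ H]
    (L : Set (Submodule ℂ H)) (Φ : (H →L[ℂ] H) → (H →L[ℂ] H)) : Prop :=
  ∀ A ∈ algL L, opRank A < Cardinal.aleph0 → opRank (Φ A) = opRank A

/-- `a ∼ b`: (nonzero) vectors `a` and `b` are linearly dependent. -/
def Dep {H : Type*} [NormedAddCommGroup H] [InnerProductSpace ℂ H] (a b : H) : Prop :=
  ∃ c : ℂ, c ≠ 0 ∧ b = c • a

/-- `N` is consistent with respect to `Φ`. -/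
def Consistent {H : Type*} [NormedAddCommGroup H] [InnerProductSpace ℂ H]
    (L : Set (Submodule ℂ H)) (Φ : (H →L[ℂ] H) → (H →L[ℂ] H))
    (N : Submodule ℂ H) : Prop :=
  N ≠ ⊥ ∧ minus L N ≠ ⊤ ∧
    ∃ (U : N →ₗ[ℂ] H) (V : ((minus L N)ᗮ : Submodule ℂ H) →ₗ[ℂ] H),
      ∀ (x : N) (f : ((minus L N)ᗮ : Submodule ℂ H)),
        Φ (rankOne (x : H) (f : H)) = rankOne (U x) (V f)

/-- `N` is twisted with respect to `Φ`. -/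
def Twisted {H : Type*} [NormedAddCommGroup H] [InnerProductSpace ℂ H]
    (L : Set (Submodule ℂ H)) (Φ : (H →L[ℂ] H) → (H →L[ℂ] H))
    (N : Submodule ℂ H) : Prop :=
  N ≠ ⊥ ∧ minus L N ≠ ⊤ ∧
    ∃ (U : ((minus L N)ᗮ : Submodule ℂ H) →ₗ⋆[ℂ] H) (V : N →ₗ⋆[ℂ] H),
      ∀ (x : N) (f : ((minus L N)ᗮ : Submodule ℂ H)),
        Φ (rankOne (x : H) (f : H)) = rankOne (U f) (V x)

/-- `N` is isolated: `dim N = 1` and `N^⊥ ∈ L`. -/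
def Isolated {H : Type*} [NormedAddCommGroup H] [InnerProductSpace ℂ H]
    (L : Set (Submodule ℂ H)) (N : Submodule ℂ H) : Prop :=
  Module.rank ℂ N = 1 ∧ Nᗮ ∈ L

/-- The family `F` of all `N ∈ L` with `N ≠ {0}` and `N₋ ≠ H`. -/
def famF {H : Type*} [NormedAddCommGroup H] [InnerProductSpace ℂ H]
    (L : Set (Submodule ℂ H)) : Set (Submodule ℂ H) :=
  {N | N ∈ L ∧ N ≠ ⊥ ∧ minus L N ≠ ⊤}

/-- Subspaces are comparable if one contains the other. -/
def Comparable' {H : Type*} [NormedAddCommGroup H] [InnerProductSpace ℂ H]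
    (M N : Submodule ℂ H) : Prop :=
  M ≤ N ∨ N ≤ M

/-- There is a chain in `F` from `M` to `N`. -/
def ChainConn {H : Type*} [NormedAddCommGroup H] [InnerProductSpace ℂ H]
    (L : Set (Submodule ℂ H)) (M N : Submodule ℂ H) : Prop :=
  ∃ (n : ℕ) (c : Fin (n + 1) → Submodule ℂ H),
    (∀ k, c k ∈ famF L) ∧ c 0 = M ∧ c (Fin.last n) = N ∧
      ∀ k : Fin n, Comparable' (c k.castSucc) (c k.succ)

/-- `𝔊_N`: all members of `F` that can be connected to `N` by a chain. -/
def GSet {H : Type*} [NormedAddCommGroup H] [InnerProductSpace ℂ H]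
    (L : Set (Submodule ℂ H)) (N : Submodule ℂ H) : Set (Submodule ℂ H) :=
  {M | M ∈ famF L ∧ ChainConn L N M}

end


/-- `Φ` is continuous on `Alg L` with respect to the weak operator topology. -/
def WOTContinuousOn {H : Type*} [NormedAddCommGroup H] [InnerProductSpace ℂ H]
    (L : Set (Submodule ℂ H)) (Φ : (H →L[ℂ] H) → (H →L[ℂ] H)) : Prop :=
  ContinuousOn
    (fun A : H →WOT[ℂ] H =>
      ContinuousLinearMapWOT.ofCLM (Φ (ContinuousLinearMapWOT.toCLM A)))
    (ContinuousLinearMapWOT.ofCLM '' algL L)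

/-!
Call a pair of injective maps implementing `Φ` on the rank one operators `x ⊗ f*` with `x ∈ M` and
`f ∈ M₋ᗮ` a frame at `M`. Consistency provides a frame at every `M ∈ F`, and the left maps of
frames at comparable subspaces differ by a scalar. A chain of compatible frames whose ends are
comparable but incompatible would, if shortest possible, have odd length and form a crown
`E₀ ≤ G₀ ≥ E₁ ≤ ⋯ ≤ Gₘ ≥ E₀` in which the `Eₖ` are mutually orthogonal and so are the `(Gₖ)₋ᗮ`:
a nonzero intersection would yield a shortcut. Around a crown there is an operator of rank at most
`m` whose image under `Φ` has rank `m + 1` unless the product of the scalars is `1`. Hence the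
frames can be chosen coherently, and since the projections onto members of `L` commute, the
coherent left and right maps glue to linear maps on the spans of the `M ∈ F` and of the `M₋ᗮ`,
which are dense by complete distributivity.

The formula for `Φ(A)` holds on the span of the rank one operators. This span is WOT dense in
`Alg L`: a finite rank functional annihilating it is given by an operator `R` mapping every `M` into
`M₋`, and the trace of `R A`, which again maps every `M` into `M₋`, vanishes by an induction on the
rank.
-/

section Lattice

variable {H : Type*} [NormedAddCommGroup H] [InnerProductSpace ℂ H]
  {L : Set (Submodule ℂ H)} {E M N : Submodule ℂ H}

theorem le_closedJoin {S : Set (Submodule ℂ H)} (hE : E ∈ S) : E ≤ closedJoin S :=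
  (le_sSup hE).trans (Submodule.le_topologicalClosure _)

theorem isClosed_closedJoin (S : Set (Submodule ℂ H)) : IsClosed (closedJoin S : Set H) :=
  Submodule.isClosed_topologicalClosure _

theorem closedJoin_le {S : Set (Submodule ℂ H)} (hE : IsClosed (E : Set H))
    (h : ∀ F ∈ S, F ≤ E) : closedJoin S ≤ E :=
  Submodule.topologicalClosure_minimal _ (sSup_le h) hE

theorem le_minus (hE : E ∈ L) (h : ¬ M ≤ E) : E ≤ minus L M :=
  le_closedJoin ⟨hE, h⟩

theorem isClosed_minus (L : Set (Submodule ℂ H)) (M : Submodule ℂ H) :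
    IsClosed (minus L M : Set H) :=
  isClosed_closedJoin _

theorem minus_mono (h : M ≤ N) : minus L M ≤ minus L N :=
  closedJoin_le (isClosed_minus L N) fun _ hF => le_minus hF.1 fun hMF => hF.2 (h.trans hMF)

theorem orthogonal_minus_inf_le (hL : IsSubspaceLattice L) :
    (minus L M)ᗮ ⊓ (minus L N)ᗮ ≤ (minus L (closedJoin {M, N}))ᗮ := by
  refine Submodule.IsOrtho.symm (closedJoin_le (Submodule.isClosed_orthogonal _) ?_)
  rintro E ⟨hE, hMN⟩
  have not_both : ¬ M ≤ E ∨ ¬ N ≤ E := by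
    by_contra! h
    refine hMN (closedJoin_le (hL.isClosed E hE) ?_)
    rintro _ (rfl | rfl)
    exacts [h.1, h.2]
  refine Submodule.IsOrtho.symm ?_
  rcases not_both with h | h
  · exact inf_le_left.trans (Submodule.orthogonal_le (le_minus hE h))
  · exact inf_le_right.trans (Submodule.orthogonal_le (le_minus hE h))

theorem IsSubspaceLattice.minus_mem (hL : IsSubspaceLattice L) (M : Submodule ℂ H) :
    minus L M ∈ L :=
  hL.join_mem _ fun _ hF => hF.1

theorem IsSubspaceLattice.inf_mem (hL : IsSubspaceLattice L) (hM : M ∈ L) (hN : N ∈ L) :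
    M ⊓ N ∈ L :=
  sInf_pair (a := M) (b := N) ▸ hL.sInf_mem {M, N} (Set.pair_subset hM hN)

theorem IsSubspaceLattice.inf_mem_famF (hL : IsSubspaceLattice L) (hM : M ∈ famF L)
    (hN : N ∈ famF L) (h : M ⊓ N ≠ ⊥) : M ⊓ N ∈ famF L :=
  ⟨hL.inf_mem hM.1 hN.1, h, ne_top_of_le_ne_top hM.2.2 (minus_mono inf_le_left)⟩

theorem IsSubspaceLattice.closedJoin_pair_mem_famF (hL : IsSubspaceLattice L)
    (hM : M ∈ famF L) (hN : N ∈ famF L) (h : (minus L M)ᗮ ⊓ (minus L N)ᗮ ≠ ⊥) :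
    closedJoin {M, N} ∈ famF L := by
  refine ⟨hL.join_mem _ (Set.pair_subset hM.1 hN.1),
    ne_bot_of_le_ne_bot hM.2.1 (le_closedJoin (Set.mem_insert M {N})), fun htop => h ?_⟩
  simpa [htop] using orthogonal_minus_inf_le (M := M) (N := N) hL

theorem exists_ne_zero_of_mem_famF (hM : M ∈ famF L) : ∃ x ∈ M, x ≠ 0 :=
  Submodule.exists_mem_ne_zero_of_ne_bot hM.2.1

theorem exists_orthogonal_minus_ne_zero_of_mem_famF [CompleteSpace H] (hM : M ∈ famF L) :
    ∃ f ∈ (minus L M)ᗮ, f ≠ 0 := by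
  refine Submodule.exists_mem_ne_zero_of_ne_bot fun h => hM.2.2 ?_
  have : CompleteSpace (minus L M) := (isClosed_minus L M).completeSpace_coe
  exact Submodule.orthogonal_eq_bot_iff.1 h

end Lattice

section CompleteDistributivity

/-- Needed because the index types in `IsCompletelyDistributive` live in `Type`. -/
theorem small_of_separableSpace (X : Type*) [MetricSpace X]
    [TopologicalSpace.SeparableSpace X] : Small.{0} X :=
  small_of_injective (kuratowskiEmbedding.isometry X).injective

variable {H : Type*} [NormedAddCommGroup H] [InnerProductSpace ℂ H]
  {L : Set (Submodule ℂ H)} {E : Submodule ℂ H}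

theorem IsCompletelyDistributive.iInf_closedJoin_eq (hcd : IsCompletelyDistributive L)
    {I : Type*} {J : I → Type*} [Small.{0} I] [∀ i, Small.{0} (J i)]
    (E : ∀ i, J i → Submodule ℂ H) (hE : ∀ i j, E i j ∈ L) :
    ⨅ i, closedJoin (Set.range (E i)) =
      closedJoin (Set.range fun φ : ∀ i, J i => ⨅ i, E i (φ i)) := by
  let e : Shrink.{0} I ≃ I := (equivShrink I).symm
  let d (i : I) : Shrink.{0} (J i) ≃ J i := (equivShrink (J i)).symm
  have hE' := (hcd (Shrink I) (fun i => Shrink (J (e i))) (fun i j => E (e i) (d (e i) j))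
    fun i j => hE _ _).1
  let c : (∀ i, Shrink.{0} (J (e i))) ≃ ∀ i, J i := e.piCongr fun i => d (e i)
  have iInf_c (φ : ∀ i, Shrink.{0} (J (e i))) :
      ⨅ i, E (e i) (d (e i) (φ i)) = ⨅ i, E i (c φ i) := by
    rw [← e.iInf_comp]
    simp only [c, Equiv.piCongr_apply_apply]
  have range_d (i : Shrink.{0} I) :
      Set.range (fun j => E (e i) (d (e i) j)) = Set.range (E (e i)) :=
    (d (e i)).surjective.range_comp (E (e i))
  simp only [iInf_c, range_d] at hE'
  rw [e.iInf_comp (g := fun i => closedJoin (Set.range (E i)))] at hE'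
  exact hE'.trans (congrArg closedJoin (c.surjective.range_comp fun φ => ⨅ i, E i (φ i)))

theorem IsCompletelyDistributive.mem_of_forall_mem_minus [Small.{0} H]
    (hcd : IsCompletelyDistributive L) (hL : IsSubspaceLattice L) (hE : E ∈ L) {x : H}
    (hx : ∀ M ∈ L, ¬ M ≤ E → x ∈ minus L M) : x ∈ E := by
  have : Small.{0} (Submodule ℂ H) := small_of_injective SetLike.coe_injective
  let I := {M // M ∈ L ∧ ¬ M ≤ E}
  let J (M : I) := {G // G ∈ L ∧ ¬ M.1 ≤ G}
  have hcdE := hcd.iInf_closedJoin_eq (fun (M : I) (G : J M) => G.1) fun _ G => G.2.1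
  have hx_inf : x ∈ ⨅ M : I, closedJoin (Set.range fun G : J M => G.1) := by
    refine (Submodule.mem_iInf _).2 fun M => ?_
    have range_J : Set.range (fun G : J M => G.1) = {G | G ∈ L ∧ ¬ M.1 ≤ G} := Subtype.range_val
    exact range_J ▸ hx M.1 M.2.1 M.2.2
  rw [hcdE] at hx_inf
  refine closedJoin_le (hL.isClosed E hE) ?_ hx_inf
  rintro _ ⟨φ, rfl⟩
  by_contra hφ
  have hφL : ⨅ M : I, (φ M).1 ∈ L := hL.sInf_mem _ (Set.range_subset_iff.2 fun M => (φ M).2.1)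
  exact (φ ⟨_, hφL, hφ⟩).2.2 (iInf_le (fun M => (φ M).1) _)

theorem IsCompletelyDistributive.closedJoin_famF [Small.{0} H]
    (hcd : IsCompletelyDistributive L) (hL : IsSubspaceLattice L) :
    closedJoin (famF L) = ⊤ := by
  refine eq_top_iff.2 fun x _ => hcd.mem_of_forall_mem_minus hL
    (hL.join_mem _ fun M hM => hM.1) fun M hM hMF => ?_
  have hMtop : minus L M = ⊤ := by
    by_contra h
    exact hMF (le_closedJoin ⟨hM, fun h0 => hMF (h0.trans_le bot_le), h⟩)
  exact hMtop ▸ Submodule.mem_top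

theorem IsCompletelyDistributive.dense_of_forall_famF_le [Small.{0} H]
    (hcd : IsCompletelyDistributive L) (hL : IsSubspaceLattice L) {D : Submodule ℂ H}
    (hD : ∀ M ∈ famF L, M ≤ D) : Dense (D : Set H) := by
  rw [Submodule.dense_iff_topologicalClosure_eq_top, ← top_le_iff, ← hcd.closedJoin_famF hL]
  exact Submodule.topologicalClosure_mono (sSup_le hD)

theorem IsCompletelyDistributive.dense_of_forall_orthogonal_minus_le [Small.{0} H]
    [CompleteSpace H] (hcd : IsCompletelyDistributive L) (hL : IsSubspaceLattice L)
    {D : Submodule ℂ H} (hD : ∀ M ∈ famF L, (minus L M)ᗮ ≤ D) : Dense (D : Set H) := by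
  rw [Submodule.dense_iff_topologicalClosure_eq_top, Submodule.topologicalClosure_eq_top_iff,
    eq_bot_iff]
  refine fun x hx => hcd.mem_of_forall_mem_minus hL hL.bot_mem fun M hM hM0 => ?_
  by_cases hMF : M ∈ famF L
  · have : CompleteSpace (minus L M) := (isClosed_minus L M).completeSpace_coe
    rw [← Submodule.orthogonal_orthogonal (minus L M)]
    exact Submodule.orthogonal_le (hD M hMF) hx
  · have hMtop : minus L M = ⊤ := by
      by_contra h
      exact hMF ⟨hM, fun h0 => hM0 h0.le, h⟩
    exact hMtop ▸ Submodule.mem_top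

end CompleteDistributivity

section Projections

variable {H : Type*} [NormedAddCommGroup H] [InnerProductSpace ℂ H] [CompleteSpace H]
  {L : Set (Submodule ℂ H)} {E F : Submodule ℂ H}

theorem exists_projOf_eq_starProjection (hE : IsClosed (E : Set H)) :
    ∃ _ : E.HasOrthogonalProjection, projOf E = E.starProjection := by
  have : CompleteSpace E := hE.completeSpace_coe
  exact ⟨inferInstance, dif_pos hE⟩

theorem isProj_projOf (hE : IsClosed (E : Set H)) :
    LinearMap.IsProj E (projOf E : H →ₗ[ℂ] H) := by
  obtain ⟨_, h⟩ := exists_projOf_eq_starProjection hE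
  rw [h]
  exact ⟨E.starProjection_apply_mem, fun x hx => Submodule.starProjection_eq_self_iff.2 hx⟩

theorem projOf_apply_eq_zero_iff (hE : IsClosed (E : Set H)) {x : H} :
    projOf E x = 0 ↔ x ∈ Eᗮ := by
  obtain ⟨_, h⟩ := exists_projOf_eq_starProjection hE
  rw [h, Submodule.starProjection_apply_eq_zero_iff]

theorem isSymmetric_projOf (hE : IsClosed (E : Set H)) :
    (projOf E : H →ₗ[ℂ] H).IsSymmetric := by
  obtain ⟨_, h⟩ := exists_projOf_eq_starProjection hE
  rw [h]
  exact E.starProjection_isSymmetric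

theorem projOf_orthogonal (hE : IsClosed (E : Set H)) : projOf Eᗮ = 1 - projOf E := by
  obtain ⟨_, h⟩ := exists_projOf_eq_starProjection hE
  obtain ⟨_, h'⟩ := exists_projOf_eq_starProjection (Submodule.isClosed_orthogonal E)
  rw [h, h']
  exact E.starProjection_orthogonal

theorem projOf_mem_of_commute (hF : IsClosed (F : Set H))
    (h : Commute (projOf E) (projOf F)) {x : H} (hx : x ∈ F) : projOf E x ∈ F := by
  have hcomm : projOf E (projOf F x) = projOf F (projOf E x) := DFunLike.congr_fun h.eq x
  rw [show projOf F x = x from (isProj_projOf hF).map_id x hx] at hcomm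
  exact hcomm ▸ (isProj_projOf hF).map_mem _

theorem isOrtho_of_commute_projOf (hE : IsClosed (E : Set H)) (hF : IsClosed (F : Set H))
    (h : Commute (projOf E) (projOf F)) (hEF : E ⊓ F = ⊥) : E ⟂ F := by
  refine Submodule.isOrtho_iff_inner_eq.2 fun x hx y hy => ?_
  have hy0 : projOf E y ∈ E ⊓ F := ⟨(isProj_projOf hE).map_mem y, projOf_mem_of_commute hF h hy⟩
  rw [hEF, Submodule.mem_bot, projOf_apply_eq_zero_iff hE] at hy0
  exact Submodule.inner_right_of_mem_orthogonal hx hy0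

theorem IsCSL.commute_projOf (hL : IsCSL L) (hE : E ∈ L) (hF : F ∈ L) :
    Commute (projOf E) (projOf F) :=
  hL.commutes E hE F hF

theorem commute_projOf_orthogonal (hE : IsClosed (E : Set H)) (hF : IsClosed (F : Set H))
    (h : Commute (projOf E) (projOf F)) : Commute (projOf Eᗮ) (projOf Fᗮ) := by
  rw [projOf_orthogonal hE, projOf_orthogonal hF]
  exact ((Commute.one_left _).sub_left ((Commute.one_right _).sub_right h))

end Projections

section RankOne

variable {H : Type*} [NormedAddCommGroup H] [InnerProductSpace ℂ H] {ι : Type*} [Fintype ι]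

theorem rankOne_def (x f : H) : rankOne x f = InnerProductSpace.rankOne ℂ x f := rfl

theorem rankOne_apply (x f h : H) : rankOne x f h = ⟪f, h⟫_ℂ • x := rfl

theorem rankOne_ne_zero_iff {x f : H} : rankOne x f ≠ 0 ↔ x ≠ 0 ∧ f ≠ 0 := by
  rw [rankOne_def, Ne, InnerProductSpace.rankOne_eq_zero, not_or]

theorem sum_rankOne_apply (ξ η : ι → H) (h : H) :
    (∑ i, rankOne (ξ i) (η i)) h = ∑ i, ⟪η i, h⟫_ℂ • ξ i := by
  simp only [_root_.sum_apply, rankOne_apply]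

theorem mul_sum_rankOne (D : H →L[ℂ] H) (ξ η : ι → H) :
    D * ∑ i, rankOne (ξ i) (η i) = ∑ i, rankOne (D (ξ i)) (η i) := by
  rw [Finset.mul_sum]
  exact Finset.sum_congr rfl fun i _ => InnerProductSpace.comp_rankOne (ξ i) (η i) D

theorem sum_rankOne_mul {T : H →L[ℂ] H} (hT : (T : H →ₗ[ℂ] H).IsSymmetric) (ξ η : ι → H) :
    (∑ i, rankOne (ξ i) (η i)) * T = ∑ i, rankOne (ξ i) (T (η i)) := by
  ext h
  simp only [mul_apply_eq_comp, sum_rankOne_apply]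
  exact Finset.sum_congr rfl fun i _ => congrArg (· • ξ i) (hT (η i) h).symm

theorem sum_rankOne_apply_mem_span (ξ η : ι → H) (h : H) :
    (∑ i, rankOne (ξ i) (η i)) h ∈ Submodule.span ℂ (Set.range ξ) := by
  rw [sum_rankOne_apply]
  exact Submodule.sum_mem _ fun i _ =>
    Submodule.smul_mem _ _ (Submodule.subset_span (Set.mem_range_self i))

theorem sum_inner_eq_zero_of_sum_rankOne_eq_zero {ξ η : ι → H}
    (h : ∑ i, rankOne (ξ i) (η i) = 0) : ∑ i, ⟪η i, ξ i⟫_ℂ = 0 := by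
  let K := Submodule.span ℂ (Set.range ξ)
  have : FiniteDimensional ℂ K := FiniteDimensional.span_of_finite ℂ (Set.finite_range ξ)
  let b := stdOrthonormalBasis ℂ K
  have expand (i : ι) : ξ i = ∑ k, ⟪(b k : H), ξ i⟫_ℂ • (b k : H) := by
    have hb := congrArg Subtype.val
      (b.sum_repr' ⟨ξ i, Submodule.subset_span (Set.mem_range_self i)⟩)
    simpa only [Submodule.coe_sum, Submodule.coe_smul, Submodule.coe_inner] using hb.symm
  calc ∑ i, ⟪η i, ξ i⟫_ℂ
      = ∑ i, ∑ k, ⟪(b k : H), ξ i⟫_ℂ * ⟪η i, (b k : H)⟫_ℂ := by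
        refine Finset.sum_congr rfl fun i _ => ?_
        conv_lhs => rw [expand i]
        simp only [inner_sum, inner_smul_right]
    _ = ∑ k, ⟪(b k : H), (∑ i, rankOne (ξ i) (η i)) (b k)⟫_ℂ := by
        rw [Finset.sum_comm]
        simp only [sum_rankOne_apply, inner_sum, inner_smul_right, mul_comm]
    _ = 0 := by simp [h]

end RankOne

section Trace

variable {H : Type*} [NormedAddCommGroup H] [InnerProductSpace ℂ H]
  {L : Set (Submodule ℂ H)} {ι : Type*}

/-- `R` maps every `M ∈ L` into `M₋`. For `R` of finite rank this says that `R` annihilates the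
rank one operators of `Alg L` in the trace pairing. -/
def MapsIntoMinus (L : Set (Submodule ℂ H)) (R : H →L[ℂ] H) : Prop :=
  ∀ M ∈ L, ∀ y ∈ M, R y ∈ minus L M

theorem IsCompletelyDistributive.eq_bot_of_forall_le_orthogonal_or_le_minus [Small.{0} H]
    (hcd : IsCompletelyDistributive L) (hL : IsSubspaceLattice L) {K : Submodule ℂ H}
    (hK : ∀ M ∈ L, K ≤ Mᗮ ∨ K ≤ minus L M) : K = ⊥ := by
  let E := closedJoin {M ∈ L | K ≤ Mᗮ}
  have hKE : K ≤ E := fun x hx =>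
    hcd.mem_of_forall_mem_minus hL (hL.join_mem _ fun M hM => hM.1) fun M hM hME =>
      (hK M hM).resolve_left (fun h => hME (le_closedJoin ⟨hM, h⟩)) hx
  have hEK : E ≤ Kᗮ :=
    closedJoin_le (Submodule.isClosed_orthogonal K) fun M hM => Submodule.IsOrtho.symm hM.2
  exact eq_bot_iff.2 ((le_inf le_rfl (hKE.trans hEK)).trans (Submodule.inf_orthogonal_eq_bot K).le)

theorem apply_eq_zero_of_isSymmetric_of_apply_add_mem_orthogonal {T : H →ₗ[ℂ] H}
    (hT : T.IsSymmetric) {S : Submodule ℂ H} (hS : S ∈ Module.End.invtSubmodule T) {u v : H}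
    (hu : u ∈ Sᗮ) (hv : v ∈ Sᗮᗮ) (huv : T (u + v) ∈ Sᗮ) : T v = 0 := by
  have hS' := hT.orthogonalComplement_mem_invtSubmodule hS
  have hTv : T v ∈ Sᗮ := by
    rw [map_add] at huv
    exact (Submodule.add_mem_iff_right Sᗮ (hS' hu)).1 huv
  have hTv' : T v ∈ Sᗮᗮ := hT.orthogonalComplement_mem_invtSubmodule hS' hv
  exact inner_self_eq_zero.1 (Submodule.inner_right_of_mem_orthogonal hTv hTv')

theorem finrank_span_range_comp_lt {K V W : Type*} [Field K] [AddCommGroup V] [Module K V]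
    [AddCommGroup W] [Module K W] [Finite ι] {T : V →ₗ[K] W} {ξ : ι → V} {v : V}
    (hv : v ∈ Submodule.span K (Set.range ξ)) (hv0 : v ≠ 0) (hTv : T v = 0) :
    Module.finrank K (Submodule.span K (Set.range (T ∘ ξ))) <
      Module.finrank K (Submodule.span K (Set.range ξ)) := by
  let S := Submodule.span K (Set.range ξ)
  have : FiniteDimensional K S := FiniteDimensional.span_of_finite K (Set.finite_range ξ)
  have hker : 0 < Module.finrank K (LinearMap.ker (T.domRestrict S)) :=
    Module.finrank_pos_iff_exists_ne_zero.2
      ⟨⟨⟨v, hv⟩, hTv⟩, fun h => hv0 (congrArg (fun w => (w.1 : V)) h)⟩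
  have hrange : Submodule.span K (Set.range (T ∘ ξ)) = LinearMap.range (T.domRestrict S) := by
    rw [LinearMap.range_domRestrict, Submodule.map_span, Set.range_comp]
  have hsum := (T.domRestrict S).finrank_range_add_finrank_ker
  rw [hrange]
  change _ < Module.finrank K S
  omega

variable [CompleteSpace H]

/-- The commutant of the projections onto the members of `L`. -/
def projCommutant (L : Set (Submodule ℂ H)) : Subalgebra ℂ (H →L[ℂ] H) :=
  Subalgebra.centralizer ℂ (projOf '' L)

theorem commute_projOf_of_mem_projCommutant {D : H →L[ℂ] H} (hD : D ∈ projCommutant L)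
    {M : Submodule ℂ H} (hM : M ∈ L) : Commute D (projOf M) :=
  (Subalgebra.mem_centralizer_iff ℂ |>.1 hD (projOf M) ⟨M, hM, rfl⟩).symm

theorem projOf_mem_projCommutant (hL : IsCSL L) {M : Submodule ℂ H} (hM : M ∈ L) :
    projOf M ∈ projCommutant L := by
  refine (Subalgebra.mem_centralizer_iff ℂ).2 ?_
  rintro _ ⟨N, hN, rfl⟩
  exact hL.commutes N hN M hM

theorem projOf_orthogonal_mem_projCommutant (hL : IsCSL L) {M : Submodule ℂ H} (hM : M ∈ L) :
    projOf Mᗮ ∈ projCommutant L := by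
  rw [projOf_orthogonal (hL.isClosed M hM)]
  exact sub_mem (one_mem _) (projOf_mem_projCommutant hL hM)

theorem apply_mem_of_mem_projCommutant (hL : IsSubspaceLattice L) {D : H →L[ℂ] H}
    (hD : D ∈ projCommutant L) {M : Submodule ℂ H} (hM : M ∈ L) {x : H} (hx : x ∈ M) :
    D x ∈ M := by
  have hP := isProj_projOf (hL.isClosed M hM)
  have hcomm := DFunLike.congr_fun (commute_projOf_of_mem_projCommutant hD hM).eq x
  rw [mul_apply_eq_comp, mul_apply_eq_comp,
    show projOf M x = x from hP.map_id x hx] at hcomm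
  exact hcomm ▸ hP.map_mem (D x)

theorem MapsIntoMinus.mul_left (hL : IsSubspaceLattice L) {R D : H →L[ℂ] H}
    (hR : MapsIntoMinus L R) (hD : D ∈ projCommutant L) : MapsIntoMinus L (D * R) :=
  fun M hM y hy => apply_mem_of_mem_projCommutant hL hD (hL.minus_mem M) (hR M hM y hy)

/-- The subspace `{(D ξᵢ)ᵢ | D ∈ projCommutant L}` of `⨁ᵢ H`. -/
noncomputable def commutantOrbit (L : Set (Submodule ℂ H)) (ξ : ι → H) :
    Submodule ℂ (PiLp 2 fun _ : ι => H) :=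
  (Subalgebra.toSubmodule (projCommutant L)).map
    ((WithLp.linearEquiv 2 ℂ (ι → H)).symm.toLinearMap ∘ₗ
      LinearMap.pi fun i => (ContinuousLinearMap.apply ℂ H (ξ i)).toLinearMap)

variable [Fintype ι]

theorem mem_orthogonal_commutantOrbit_iff {ξ : ι → H} {w : PiLp 2 fun _ : ι => H} :
    w ∈ (commutantOrbit L ξ)ᗮ ↔ ∀ D ∈ projCommutant L, ∑ i, ⟪w i, D (ξ i)⟫_ℂ = 0 := by
  rw [Submodule.mem_orthogonal']
  constructor
  · intro h D hD
    exact (PiLp.inner_apply w _).symm.trans (h _ (Submodule.mem_map_of_mem hD))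
  · rintro h _ ⟨D, hD, rfl⟩
    exact (PiLp.inner_apply w _).trans (h D hD)

theorem apply_eq_zero_of_mem_commutantOrbit {ξ η : ι → H} {T : H →L[ℂ] H}
    (hT : (T : H →ₗ[ℂ] H).IsSymmetric) (hTL : T ∈ projCommutant L)
    (hcomm : ∀ D ∈ projCommutant L, Commute D T)
    (hzero : ∀ D ∈ projCommutant L, ∑ i, ⟪η i, D (T (ξ i))⟫_ℂ = 0)
    {u v : PiLp 2 fun _ : ι => H} (hu : u ∈ (commutantOrbit L ξ)ᗮ)
    (hv : v ∈ (commutantOrbit L ξ)ᗮᗮ) (huv : WithLp.toLp 2 η = u + v) (i : ι) : T (v i) = 0 := by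
  let T' := ((T : H →ₗ[ℂ] H).compLeft ι).withLpMap 2
  have hT' : T'.IsSymmetric := fun x y => by
    simp only [PiLp.inner_apply]
    exact Finset.sum_congr rfl fun j _ => hT (x j) (y j)
  have hinv : commutantOrbit L ξ ∈ Module.End.invtSubmodule T' := by
    rintro _ ⟨D, hD, rfl⟩
    exact ⟨T * D, (projCommutant L).mul_mem hTL hD, rfl⟩
  have hTuv : T' (u + v) ∈ (commutantOrbit L ξ)ᗮ := by
    rw [mem_orthogonal_commutantOrbit_iff, ← huv]
    intro D hD
    rw [← hzero D hD]
    refine Finset.sum_congr rfl fun j _ => (hT (η j) (D (ξ j))).trans ?_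
    exact congrArg (fun z => ⟪η j, z⟫_ℂ) (DFunLike.congr_fun (hcomm D hD).eq (ξ j)).symm
  have hTv := apply_eq_zero_of_isSymmetric_of_apply_add_mem_orthogonal hT' hinv hu hv hTuv
  exact congrArg (fun z : PiLp 2 fun _ : ι => H => z i) hTv

theorem forall_sum_inner_eq_zero_or (hL : IsCSL L) {ξ η : ι → H}
    (hR : MapsIntoMinus L (∑ i, rankOne (ξ i) (η i)))
    (ih : ∀ ξ' : ι → H, Module.finrank ℂ (Submodule.span ℂ (Set.range ξ')) <
        Module.finrank ℂ (Submodule.span ℂ (Set.range ξ)) →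
      MapsIntoMinus L (∑ i, rankOne (ξ' i) (η i)) → ∑ i, ⟪η i, ξ' i⟫_ℂ = 0)
    {M : Submodule ℂ H} (hM : M ∈ L) :
    (∀ D ∈ projCommutant L, ∑ i, ⟪η i, D (projOf M (ξ i))⟫_ℂ = 0) ∨
      ∀ D ∈ projCommutant L, ∑ i, ⟪η i, D (projOf (minus L M)ᗮ (ξ i))⟫_ℂ = 0 := by
  have hMc := hL.isClosed M hM
  let Q := projOf (minus L M)ᗮ
  have hQL : Q ∈ projCommutant L :=
    projOf_orthogonal_mem_projCommutant hL (hL.minus_mem M)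
  by_cases hinj : ∀ v ∈ Submodule.span ℂ (Set.range ξ), Q v = 0 → v = 0
  · left
    intro D hD
    have hRP : (∑ i, rankOne (ξ i) (η i)) * projOf M = 0 := by
      ext y
      refine hinj _ (sum_rankOne_apply_mem_span _ _ _)
        ((projOf_apply_eq_zero_iff (Submodule.isClosed_orthogonal _)).2 ?_)
      exact Submodule.le_orthogonal_orthogonal _ (hR M hM _ ((isProj_projOf hMc).map_mem y))
    have hDRP : ∑ i, rankOne (D (ξ i)) (projOf M (η i)) = 0 := by
      rw [← mul_sum_rankOne, ← sum_rankOne_mul (isSymmetric_projOf hMc), hRP, mul_zero]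
    rw [← sum_inner_eq_zero_of_sum_rankOne_eq_zero hDRP]
    refine Finset.sum_congr rfl fun i _ => Eq.trans ?_ (isSymmetric_projOf hMc (η i) _).symm
    exact congrArg (fun z => ⟪η i, z⟫_ℂ)
      (DFunLike.congr_fun (commute_projOf_of_mem_projCommutant hD hM).eq (ξ i))
  · right
    intro D hD
    push Not at hinj
    obtain ⟨v, hv, hQv, hv0⟩ := hinj
    refine ih (fun i => D (Q (ξ i))) ?_ ?_
    · exact finrank_span_range_comp_lt (T := ((D * Q : H →L[ℂ] H) : H →ₗ[ℂ] H)) hv hv0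
        (show D (Q v) = 0 by rw [hQv, map_zero])
    · rw [← mul_sum_rankOne D, ← mul_sum_rankOne Q]
      exact (hR.mul_left hL.toIsSubspaceLattice hQL).mul_left hL.toIsSubspaceLattice hD

theorem commute_projOf_orthogonal_of_mem_projCommutant (hL : IsSubspaceLattice L)
    {D : H →L[ℂ] H} (hD : D ∈ projCommutant L) {M : Submodule ℂ H} (hM : M ∈ L) :
    Commute D (projOf Mᗮ) := by
  rw [projOf_orthogonal (hL.isClosed M hM)]
  exact (Commute.one_right D).sub_right (commute_projOf_of_mem_projCommutant hD hM)

/-- Induction on the rank: writing `η = u + v` along the orbit of `ξ` under the commutant, the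
dichotomy `forall_sum_inner_eq_zero_or` puts the components of `v` in `Mᗮ` or in `M₋` for each
`M ∈ L`, so that complete distributivity forces `v = 0`. -/
theorem sum_inner_eq_zero_of_mapsIntoMinus [Small.{0} H] (hL : IsCSL L)
    (hcd : IsCompletelyDistributive L) (ξ η : ι → H)
    (hR : MapsIntoMinus L (∑ i, rankOne (ξ i) (η i))) : ∑ i, ⟪η i, ξ i⟫_ℂ = 0 := by
  induction hn : Module.finrank ℂ (Submodule.span ℂ (Set.range ξ)) using Nat.strong_induction_on
    generalizing ξ with
  | _ n ih =>
    obtain ⟨_, -⟩ := exists_projOf_eq_starProjection (commutantOrbit L ξ).isClosed_orthogonal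
    obtain ⟨u, hu, v, hv, huv⟩ := Submodule.exists_add_mem_mem_orthogonal
      (K := (commutantOrbit L ξ).orthogonal) (WithLp.toLp 2 η)
    have hdich : ∀ M ∈ L, Submodule.span ℂ (Set.range v) ≤ Mᗮ ∨
        Submodule.span ℂ (Set.range v) ≤ minus L M := by
      intro M hM
      have hMm := hL.minus_mem M
      simp only [Submodule.span_le, Set.range_subset_iff, SetLike.mem_coe]
      rcases forall_sum_inner_eq_zero_or hL hR (fun ξ' hξ' hR' => ih _ (hn ▸ hξ') ξ' hR' rfl) hM
        with h | h
      · refine Or.inl fun i => (projOf_apply_eq_zero_iff (hL.isClosed M hM)).1 ?_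
        exact apply_eq_zero_of_mem_commutantOrbit (isSymmetric_projOf (hL.isClosed M hM))
          (projOf_mem_projCommutant hL hM)
          (fun D hD => commute_projOf_of_mem_projCommutant hD hM) h hu hv huv i
      · have hmc := Submodule.isClosed_orthogonal (minus L M)
        have : CompleteSpace (minus L M) := (isClosed_minus L M).completeSpace_coe
        refine Or.inr fun i => ?_
        rw [← Submodule.orthogonal_orthogonal (minus L M), ← projOf_apply_eq_zero_iff hmc]
        exact apply_eq_zero_of_mem_commutantOrbit (isSymmetric_projOf hmc)
          (projOf_orthogonal_mem_projCommutant hL hMm)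
          (fun D hD => commute_projOf_orthogonal_of_mem_projCommutant hL.toIsSubspaceLattice hD hMm)
          h hu hv huv i
    have hv0 : v = 0 := by
      have := hcd.eq_bot_of_forall_le_orthogonal_or_le_minus hL.toIsSubspaceLattice hdich
      ext i
      exact Submodule.span_eq_bot.1 this (v i) (Set.mem_range_self i)
    rw [hv0, add_zero] at huv
    exact mem_orthogonal_commutantOrbit_iff.1 (huv ▸ hu) 1 (one_mem _)

end Trace

section Density

variable {H : Type*} [NormedAddCommGroup H] [InnerProductSpace ℂ H]
  {L : Set (Submodule ℂ H)} {M : Submodule ℂ H} {Φ : (H →L[ℂ] H) → (H →L[ℂ] H)}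

theorem rankOne_mem_algL {x f : H} (hx : x ∈ M) (hf : f ∈ (minus L M)ᗮ) :
    rankOne x f ∈ algL L := by
  intro E hE y hy
  rw [rankOne_apply]
  by_cases hME : M ≤ E
  · exact E.smul_mem _ (hME hx)
  · rw [Submodule.inner_left_of_mem_orthogonal (le_minus hE hME hy) hf, zero_smul]
    exact E.zero_mem

/-- `Alg L` as a linear subspace of the bounded operators. -/
def algSubmodule (L : Set (Submodule ℂ H)) : Submodule ℂ (H →L[ℂ] H) where
  carrier := algL L
  zero_mem' E _ _ _ := E.zero_mem
  add_mem' hA hB E hE x hx := E.add_mem (hA E hE x hx) (hB E hE x hx)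
  smul_mem' c _ hA E hE x hx := E.smul_mem c (hA E hE x hx)

/-- A map which is linear on `Alg L`, as a linear map. -/
def IsLinearOnAlg.toLinearMap (hlin : IsLinearOnAlg L Φ) :
    algSubmodule L →ₗ[ℂ] H →L[ℂ] H where
  toFun A := Φ A
  map_add' A B := hlin.map_add A A.2 B B.2
  map_smul' c A := hlin.map_smul c A A.2

/-- The linear span of the rank one operators `x ⊗ f*` with `x ∈ M`, `f ∈ M₋ᗮ` and `M ∈ F`. -/
def rankOneSpan (L : Set (Submodule ℂ H)) : Submodule ℂ (H →L[ℂ] H) :=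
  Submodule.span ℂ {T | ∃ M ∈ famF L, ∃ x ∈ M, ∃ f ∈ (minus L M)ᗮ, T = rankOne x f}

theorem rankOneSpan_le_algSubmodule : rankOneSpan L ≤ algSubmodule L := by
  refine Submodule.span_le.2 ?_
  rintro _ ⟨M, -, x, hx, f, hf, rfl⟩
  exact rankOne_mem_algL hx hf

theorem rankOne_mem_rankOneSpan (hM : M ∈ L) {x f : H} (hx : x ∈ M) (hf : f ∈ (minus L M)ᗮ) :
    rankOne x f ∈ rankOneSpan L := by
  by_cases h : rankOne x f = 0
  · exact h ▸ zero_mem _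
  · obtain ⟨hx0, hf0⟩ := rankOne_ne_zero_iff.1 h
    refine Submodule.subset_span ⟨M, ⟨hM, Submodule.ne_bot_iff _ |>.2 ⟨x, hx, hx0⟩, ?_⟩,
      x, hx, f, hf, rfl⟩
    intro htop
    rw [htop, Submodule.top_orthogonal_eq_bot, Submodule.mem_bot] at hf
    exact hf0 hf

variable [CompleteSpace H] [Small.{0} H]

theorem sum_inner_apply_eq_zero_of_forall_mem_rankOneSpan (hL : IsCSL L)
    (hcd : IsCompletelyDistributive L) {ι : Type*} [Fintype ι] {ξ η : ι → H}
    (h : ∀ R ∈ rankOneSpan L, ∑ i, ⟪η i, R (ξ i)⟫_ℂ = 0) {A : H →L[ℂ] H} (hA : A ∈ algL L) :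
    ∑ i, ⟪η i, A (ξ i)⟫_ℂ = 0 := by
  have hR : MapsIntoMinus L (∑ i, rankOne (ξ i) (A.adjoint (η i))) := by
    intro M hM y hy
    have : CompleteSpace (minus L M) := (isClosed_minus L M).completeSpace_coe
    rw [← Submodule.orthogonal_orthogonal (minus L M), Submodule.mem_orthogonal]
    intro f hf
    rw [← h _ (rankOne_mem_rankOneSpan hM (hA M hM y hy) hf), sum_rankOne_apply, inner_sum]
    refine Finset.sum_congr rfl fun i _ => ?_
    rw [rankOne_apply, inner_smul_right, inner_smul_right,
      ContinuousLinearMap.adjoint_inner_left, mul_comm]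
  simpa only [ContinuousLinearMap.adjoint_inner_left] using
    sum_inner_eq_zero_of_mapsIntoMinus hL hcd ξ _ hR

theorem exists_mem_rankOneSpan_forall_inner_eq (hL : IsCSL L)
    (hcd : IsCompletelyDistributive L) {ι : Type*} [Finite ι] (ξ η : ι → H)
    {A : H →L[ℂ] H} (hA : A ∈ algL L) :
    ∃ R ∈ rankOneSpan L, ∀ i, ⟪η i, R (ξ i)⟫_ℂ = ⟪η i, A (ξ i)⟫_ℂ := by
  classical
  have := Fintype.ofFinite ι
  let coeffs : (H →L[ℂ] H) →ₗ[ℂ] ι → ℂ := LinearMap.pi fun i =>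
    (innerₛₗ ℂ (η i)).comp (ContinuousLinearMap.apply ℂ H (ξ i)).toLinearMap
  suffices hmem : coeffs A ∈ (rankOneSpan L).map coeffs by
    obtain ⟨R, hR, hRA⟩ := hmem
    exact ⟨R, hR, congrFun hRA⟩
  by_contra hnot
  obtain ⟨φ, hφA, hφ⟩ := Submodule.exists_le_ker_of_notMem hnot
  let c (i : ι) : ℂ := φ (Pi.single i 1)
  have φ_coeffs (T : H →L[ℂ] H) :
      φ (coeffs T) = ∑ i, ⟪starRingEnd ℂ (c i) • η i, T (ξ i)⟫_ℂ := by
    rw [LinearMap.pi_apply_eq_sum_univ φ (coeffs T)]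
    refine Finset.sum_congr rfl fun i _ => ?_
    rw [inner_smul_left, Complex.conj_conj, mul_comm, smul_eq_mul]
    congr 2
    ext j
    simp only [Pi.single_apply, eq_comm]
  refine hφA ((φ_coeffs A).trans ?_)
  refine sum_inner_apply_eq_zero_of_forall_mem_rankOneSpan hL hcd (fun R hR => ?_) hA
  exact (φ_coeffs R).symm.trans (hφ ⟨R, hR, rfl⟩)

theorem ofCLM_image_algL_subset_closure (hL : IsCSL L) (hcd : IsCompletelyDistributive L) :
    (ContinuousLinearMapWOT.ofCLM '' algL L : Set (H →WOT[ℂ] H)) ⊆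
      closure (ContinuousLinearMapWOT.ofCLM '' (rankOneSpan L : Set (H →L[ℂ] H))) := by
  rintro _ ⟨A, hA, rfl⟩
  choose R hR hRA using fun s : Finset (H × H) =>
    exists_mem_rankOneSpan_forall_inner_eq hL hcd (fun p : s => p.1.1) (fun p => p.1.2) hA
  refine mem_closure_of_tendsto (f := fun s => ContinuousLinearMapWOT.ofCLM (R s))
    (b := Filter.atTop) (ContinuousLinearMapWOT.tendsto_iff_forall_dual_apply_tendsto.2 ?_)
    (Filter.Eventually.of_forall fun s => ⟨R s, hR s, rfl⟩)
  intro x y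
  obtain ⟨k, rfl⟩ := (InnerProductSpace.toDual ℂ H).surjective y
  refine tendsto_const_nhds.congr' ?_
  filter_upwards [Filter.eventually_ge_atTop {(x, k)}] with s hs
  exact (hRA s ⟨(x, k), hs (Finset.mem_singleton_self _)⟩).symm

theorem inner_apply_eq_of_forall_rankOne (hL : IsCSL L) (hcd : IsCompletelyDistributive L)
    (hlin : IsLinearOnAlg L Φ) (hwot : WOTContinuousOn L Φ) {h k h' k' : H}
    (hΦ : ∀ M ∈ famF L, ∀ x ∈ M, ∀ f ∈ (minus L M)ᗮ,
      ⟪k, Φ (rankOne x f) h⟫_ℂ = ⟪k', rankOne x f h'⟫_ℂ)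
    {A : H →L[ℂ] H} (hA : A ∈ algL L) : ⟪k, Φ A h⟫_ℂ = ⟪k', A h'⟫_ℂ := by
  let pairing (y z : H) : (H →L[ℂ] H) →ₗ[ℂ] ℂ :=
    (innerₛₗ ℂ y).comp (ContinuousLinearMap.apply ℂ H z).toLinearMap
  have on_span : ∀ R ∈ rankOneSpan L, ⟪k, Φ R h⟫_ℂ = ⟪k', R h'⟫_ℂ := by
    intro R hR
    have hker : rankOneSpan L ≤
        (LinearMap.eqLocus (pairing k h ∘ₗ hlin.toLinearMap)
          (pairing k' h' ∘ₗ (algSubmodule L).subtype)).map (algSubmodule L).subtype := by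
      refine Submodule.span_le.2 ?_
      rintro _ ⟨M, hM, x, hx, f, hf, rfl⟩
      exact ⟨⟨_, rankOne_mem_algL hx hf⟩, hΦ M hM x hx f hf, rfl⟩
    obtain ⟨_, hR', rfl⟩ := hker hR
    exact hR'
  have continuous_pairing (y z : H) :
      Continuous fun T : H →WOT[ℂ] H => pairing y z (ContinuousLinearMapWOT.toCLM T) :=
    ContinuousLinearMapWOT.continuous_dual_apply z (InnerProductSpace.toDual ℂ H y)
  refine Set.EqOn.of_subset_closure (s := ContinuousLinearMapWOT.ofCLM '' rankOneSpan L)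
    (f := fun T => pairing k h (Φ T.toCLM)) (g := fun T => pairing k' h' T.toCLM) ?_
    ((continuous_pairing k h).comp_continuousOn hwot) (continuous_pairing k' h').continuousOn
    (Set.image_mono rankOneSpan_le_algSubmodule) (ofCLM_image_algL_subset_closure hL hcd)
    ⟨A, hA, rfl⟩
  rintro _ ⟨R, hR, rfl⟩
  exact on_span R hR

end Density

section Rank

variable {H : Type*} [NormedAddCommGroup H] [InnerProductSpace ℂ H]
  {L : Set (Submodule ℂ H)} {Φ : (H →L[ℂ] H) → (H →L[ℂ] H)} {ι : Type*} [Fintype ι]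

theorem range_sum_rankOne_le (w v : ι → H) :
    LinearMap.range ((∑ i, rankOne (w i) (v i) : H →L[ℂ] H) : H →ₗ[ℂ] H) ≤
      Submodule.span ℂ (Set.range w) := by
  rintro _ ⟨h, rfl⟩
  exact sum_rankOne_apply_mem_span w v h

theorem opRank_sum_rankOne_lt_aleph0 (w v : ι → H) :
    opRank (∑ i, rankOne (w i) (v i)) < Cardinal.aleph0 := by
  have : FiniteDimensional ℂ (Submodule.span ℂ (Set.range w)) :=
    FiniteDimensional.span_of_finite ℂ (Set.finite_range w)
  exact (Submodule.rank_mono (range_sum_rankOne_le w v)).trans_lt (Module.rank_lt_aleph0 ℂ _)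

theorem sum_rankOne_apply_eq_zero_of_mem_orthogonal {w v : ι → H} {h : H}
    (hh : h ∈ (Submodule.span ℂ (Set.range v))ᗮ) : (∑ i, rankOne (w i) (v i)) h = 0 := by
  rw [sum_rankOne_apply]
  refine Finset.sum_eq_zero fun i _ => ?_
  rw [Submodule.inner_right_of_mem_orthogonal (Submodule.subset_span (Set.mem_range_self i)) hh,
    zero_smul]

theorem map_span_sum_rankOne (w v : ι → H) :
    (Submodule.span ℂ (Set.range v)).map
        ((∑ i, rankOne (w i) (v i) : H →L[ℂ] H) : H →ₗ[ℂ] H) =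
      LinearMap.range ((∑ i, rankOne (w i) (v i) : H →L[ℂ] H) : H →ₗ[ℂ] H) := by
  have : FiniteDimensional ℂ (Submodule.span ℂ (Set.range v)) :=
    FiniteDimensional.span_of_finite ℂ (Set.finite_range v)
  refine le_antisymm LinearMap.map_le_range ?_
  rintro _ ⟨h, rfl⟩
  obtain ⟨y, hy, z, hz, rfl⟩ :=
    Submodule.exists_add_mem_mem_orthogonal (K := Submodule.span ℂ (Set.range v)) h
  refine ⟨y, hy, ?_⟩
  simp only [ContinuousLinearMap.coe_coe, map_add,
    sum_rankOne_apply_eq_zero_of_mem_orthogonal hz, add_zero]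

theorem opRank_sum_rankOne_eq_card_iff {w v : ι → H} :
    opRank (∑ i, rankOne (w i) (v i)) = Fintype.card ι ↔
      LinearIndependent ℂ w ∧ LinearIndependent ℂ v := by
  let T : H →ₗ[ℂ] H := ((∑ i, rankOne (w i) (v i) : H →L[ℂ] H) : H →ₗ[ℂ] H)
  have range_T : LinearMap.range T = Submodule.span ℂ (Set.range (T ∘ v)) := by
    rw [Set.range_comp, ← Submodule.map_span]
    exact (map_span_sum_rankOne w v).symm
  have : FiniteDimensional ℂ (Submodule.span ℂ (Set.range w)) :=
    FiniteDimensional.span_of_finite ℂ (Set.finite_range w)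
  have : FiniteDimensional ℂ (LinearMap.range T) :=
    Submodule.finiteDimensional_of_le (range_sum_rankOne_le w v)
  have rank_iff : opRank (∑ i, rankOne (w i) (v i)) = Fintype.card ι ↔
      LinearIndependent ℂ (T ∘ v) := by
    rw [linearIndependent_iff_card_eq_finrank_span, opRank, ← Module.finrank_eq_rank,
      Nat.cast_inj, range_T, eq_comm]
    rfl
  refine ⟨fun h => ⟨?_, (rank_iff.1 h).of_comp T⟩, fun ⟨hw, hv⟩ => rank_iff.2 (hv.map ?_)⟩
  · rw [opRank, ← Module.finrank_eq_rank, Nat.cast_inj] at h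
    exact linearIndependent_iff_card_le_finrank_span.2
      (h.symm.trans_le (Submodule.finrank_mono (range_sum_rankOne_le w v)))
  · refine Submodule.disjoint_def.2 fun h hspan hker => ?_
    have coeff_eq_zero : ∀ i, ⟪v i, h⟫_ℂ = 0 :=
      Fintype.linearIndependent_iff.1 hw _ ((sum_rankOne_apply w v h).symm.trans hker)
    have horth : h ∈ (Submodule.span ℂ (Set.range v))ᗮ := by
      refine (Submodule.mem_orthogonal _ _).2 fun y hy => ?_
      induction hy using Submodule.span_induction with
      | mem _ hy => exact hy.choose_spec ▸ coeff_eq_zero _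
      | zero => exact inner_zero_left h
      | add y z _ _ hy hz => rw [inner_add_left, hy, hz, add_zero]
      | smul c y _ hy => rw [inner_smul_left, hy, mul_zero]
    exact inner_self_eq_zero.1 (Submodule.inner_right_of_mem_orthogonal hspan horth)

theorem IsLinearOnAlg.map_sum (hlin : IsLinearOnAlg L Φ) {A : ι → H →L[ℂ] H}
    (hA : ∀ i, A i ∈ algL L) : Φ (∑ i, A i) = ∑ i, Φ (A i) := by
  have h := _root_.map_sum hlin.toLinearMap (fun i => (⟨A i, hA i⟩ : algSubmodule L)) Finset.univ
  have hcoe : ((∑ i, ⟨A i, hA i⟩ : algSubmodule L) : H →L[ℂ] H) = ∑ i, A i :=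
    Submodule.coe_sum _ _ _
  exact hcoe ▸ h

theorem IsLinearOnAlg.map_sub (hlin : IsLinearOnAlg L Φ) {A B : H →L[ℂ] H} (hA : A ∈ algL L)
    (hB : B ∈ algL L) : Φ (A - B) = Φ A - Φ B :=
  _root_.map_sub hlin.toLinearMap ⟨A, hA⟩ ⟨B, hB⟩

theorem RankPreserving.linearIndependent_iff (hrank : RankPreserving L Φ)
    (hlin : IsLinearOnAlg L Φ) {κ : Type*} [Finite κ] {w f w' v : κ → H}
    (hmem : ∀ i, rankOne (w i) (f i) ∈ algL L)
    (hΦ : ∀ i, Φ (rankOne (w i) (f i)) = rankOne (w' i) (v i)) :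
    LinearIndependent ℂ w ∧ LinearIndependent ℂ f ↔
      LinearIndependent ℂ w' ∧ LinearIndependent ℂ v := by
  have := Fintype.ofFinite κ
  have hsum : Φ (∑ i, rankOne (w i) (f i)) = ∑ i, rankOne (w' i) (v i) := by
    rw [hlin.map_sum hmem]
    exact Finset.sum_congr rfl fun i _ => hΦ i
  have hr := hrank _ ((algSubmodule L).sum_mem fun i _ => hmem i)
    (opRank_sum_rankOne_lt_aleph0 w f)
  rw [← opRank_sum_rankOne_eq_card_iff, ← opRank_sum_rankOne_eq_card_iff, ← hsum, hr]

theorem RankPreserving.ne_zero (hrank : RankPreserving L Φ) (hlin : IsLinearOnAlg L Φ)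
    {x f u v : H} (hmem : rankOne x f ∈ algL L) (hΦ : Φ (rankOne x f) = rankOne u v)
    (hx : x ≠ 0) (hf : f ≠ 0) : u ≠ 0 ∧ v ≠ 0 := by
  have h := hrank.linearIndependent_iff hlin (κ := Unit) (w := fun _ => x) (f := fun _ => f)
    (w' := fun _ => u) (v := fun _ => v) (fun _ => hmem) fun _ => hΦ
  simpa only [linearIndependent_unique_iff, hx, hf, ne_eq, not_false_eq_true, and_self,
    true_iff] using h

end Rank

section Cycle

variable {m : ℕ}

theorem eq_zero_of_forall_succ_eq_mul {K : Type*} [Field K] {z a : Fin (m + 1) → K}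
    (hz : ∀ k, z (k + 1) = z k * a k) (ha : ∏ k, a k ≠ 1) (k : Fin (m + 1)) : z k = 0 := by
  have h0 : z 0 = 0 := by
    by_contra h0
    have ne_zero (k : Fin (m + 1)) : z k ≠ 0 := by
      induction k using Fin.reverseInduction with
      | last =>
        have := hz (Fin.last m)
        rw [Fin.last_add_one] at this
        exact left_ne_zero_of_mul (this ▸ h0)
      | cast i ih =>
        have := hz i.castSucc
        rw [Fin.coeSucc_eq_succ] at this
        exact left_ne_zero_of_mul (this ▸ ih)
    have prod_ne_zero : ∏ k, z k ≠ 0 := Finset.prod_ne_zero_iff.2 fun k _ => ne_zero k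
    refine ha (mul_left_cancel₀ prod_ne_zero ?_)
    calc (∏ k, z k) * ∏ k, a k = ∏ k, z (k + 1) := by
          simp only [hz, Finset.prod_mul_distrib]
      _ = (∏ k, z k) * 1 := by
          rw [mul_one]
          exact Equiv.prod_comp (Equiv.addRight (1 : Fin (m + 1))) z
  induction k using Fin.induction with
  | zero => exact h0
  | succ i ih => rw [← Fin.coeSucc_eq_succ, hz, ih, zero_mul]

theorem linearIndependent_sub_smul_succ {K V : Type*} [Field K] [AddCommGroup V] [Module K V]
    {u : Fin (m + 1) → V} (hu : LinearIndependent K u) {a : Fin (m + 1) → K}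
    (ha : ∏ k, a k ≠ 1) : LinearIndependent K fun k => u k - a k • u (k + 1) := by
  rw [Fintype.linearIndependent_iff] at hu ⊢
  intro z hz
  have sum_eq_zero : ∑ k, (z k - z (k - 1) * a (k - 1)) • u k = 0 := by
    rw [← hz]
    simp only [sub_smul, smul_sub, Finset.sum_sub_distrib, ← mul_smul]
    congr 1
    rw [← Equiv.sum_comp (Equiv.addRight (1 : Fin (m + 1)))]
    simp only [Equiv.coe_addRight, add_sub_cancel_right]
  refine eq_zero_of_forall_succ_eq_mul (fun k => ?_) ha
  simpa only [add_sub_cancel_right, sub_eq_zero] using hu _ sum_eq_zero (k + 1)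

variable {H : Type*} [NormedAddCommGroup H] [InnerProductSpace ℂ H]
  {L : Set (Submodule ℂ H)} {Φ : (H →L[ℂ] H) → (H →L[ℂ] H)}

theorem RankPreserving.prod_eq_one (hrank : RankPreserving L Φ) (hlin : IsLinearOnAlg L Φ)
    {x f u v : Fin (m + 1) → H} {a : Fin (m + 1) → ℂ}
    (hx : LinearIndependent ℂ x) (hf : LinearIndependent ℂ f)
    (hmem : ∀ k, rankOne (x k) (f k) ∈ algL L)
    (hmem_succ : ∀ k, rankOne (x (k + 1)) (f k) ∈ algL L)
    (hΦ : ∀ k, Φ (rankOne (x k) (f k)) = rankOne (u k) (v k))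
    (hΦ_succ : ∀ k, Φ (rankOne (x (k + 1)) (f k)) = rankOne (a k • u (k + 1)) (v k)) :
    ∏ k, a k = 1 := by
  by_contra ha
  have rankOne_sub (y z g : H) : rankOne (y - z) g = rankOne y g - rankOne z g := by
    ext h
    exact smul_sub ⟪g, h⟫_ℂ y z
  obtain ⟨hu, hv⟩ := (hrank.linearIndependent_iff hlin hmem hΦ).1 ⟨hx, hf⟩
  have hsub : LinearIndependent ℂ fun k => x k - x (k + 1) := by
    refine ((hrank.linearIndependent_iff hlin (f := f)
      (w' := fun k => u k - a k • u (k + 1)) (v := v) (fun k => ?_) fun k => ?_).2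
      ⟨linearIndependent_sub_smul_succ hu ha, hv⟩).1
    · rw [rankOne_sub]
      exact (algSubmodule L).sub_mem (hmem k) (hmem_succ k)
    · rw [rankOne_sub, rankOne_sub, hlin.map_sub (hmem k) (hmem_succ k), hΦ, hΦ_succ]
  refine one_ne_zero (Fintype.linearIndependent_iff.1 hsub (fun _ => (1 : ℂ)) ?_ 0)
  simp only [one_smul, Finset.sum_sub_distrib, sub_eq_zero]
  exact (Equiv.sum_comp (Equiv.addRight (1 : Fin (m + 1))) x).symm

end Cycle

section Frames

variable {H : Type*} [NormedAddCommGroup H] [InnerProductSpace ℂ H]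

/-- A frame of `Φ` at a member `carrier` of `famF L`: a pair of injective linear maps implementing
`Φ` on the rank one operators `x ⊗ f*` with `x ∈ carrier` and `f ∈ carrier₋^⊥`. The maps are
extended to the whole of `H`; only their values on these two subspaces are meaningful. -/
structure Frame (L : Set (Submodule ℂ H)) (Φ : (H →L[ℂ] H) → (H →L[ℂ] H)) where
  carrier : Submodule ℂ H
  mem : carrier ∈ famF L
  left : H →ₗ[ℂ] H
  right : H →ₗ[ℂ] H
  apply_rankOne : ∀ x ∈ carrier, ∀ f ∈ (minus L carrier)ᗮ,
    Φ (rankOne x f) = rankOne (left x) (right f)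
  left_ne_zero : ∀ x ∈ carrier, x ≠ 0 → left x ≠ 0
  right_ne_zero : ∀ f ∈ (minus L carrier)ᗮ, f ≠ 0 → right f ≠ 0

variable {L : Set (Submodule ℂ H)} {Φ : (H →L[ℂ] H) → (H →L[ℂ] H)}

theorem Consistent.exists_frame [CompleteSpace H] {N : Submodule ℂ H} (hcons : Consistent L Φ N)
    (hlin : IsLinearOnAlg L Φ) (hrank : RankPreserving L Φ) (hN : N ∈ famF L) :
    ∃ p : Frame L Φ, p.carrier = N := by
  obtain ⟨-, -, U, V, hUV⟩ := hcons
  obtain ⟨left, hleft⟩ := U.exists_extend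
  obtain ⟨right, hright⟩ := V.exists_extend
  have hΦ : ∀ x ∈ N, ∀ f ∈ (minus L N)ᗮ, Φ (rankOne x f) = rankOne (left x) (right f) := by
    intro x hx f hf
    rw [hUV ⟨x, hx⟩ ⟨f, hf⟩, ← hleft, ← hright]
    rfl
  have ne_zero : ∀ x ∈ N, ∀ f ∈ (minus L N)ᗮ, x ≠ 0 → f ≠ 0 → left x ≠ 0 ∧ right f ≠ 0 :=
    fun x hx f hf => hrank.ne_zero hlin (rankOne_mem_algL hx hf) (hΦ x hx f hf)
  obtain ⟨x, hx, hx0⟩ := exists_ne_zero_of_mem_famF hN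
  obtain ⟨f, hf, hf0⟩ := exists_orthogonal_minus_ne_zero_of_mem_famF hN
  exact ⟨{ carrier := N, mem := hN, left := left, right := right, apply_rankOne := hΦ
           left_ne_zero := fun y hy hy0 => (ne_zero y hy f hf hy0 hf0).1
           right_ne_zero := fun g hg hg0 => (ne_zero x hx g hg hx0 hg0).2 }, rfl⟩

namespace Frame

/-- The frame with left map multiplied by `c`; the right map is divided by `conj c`, because
`rankOne x f` is conjugate-linear in `f`. -/
noncomputable def rescale (q : Frame L Φ) (c : ℂ) (hc : c ≠ 0) : Frame L Φ where
  carrier := q.carrier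
  mem := q.mem
  left := c • q.left
  right := starRingEnd ℂ c⁻¹ • q.right
  apply_rankOne x hx f hf := by
    ext z
    simp only [q.apply_rankOne x hx f hf, rankOne_apply, LinearMap.smul_apply, inner_smul_left,
      RingHomCompTriple.comp_apply, RingHom.id_apply, smul_smul]
    rw [mul_right_comm, inv_mul_cancel₀ hc, one_mul]
  left_ne_zero x hx hx0 := smul_ne_zero hc (q.left_ne_zero x hx hx0)
  right_ne_zero f hf hf0 :=
    smul_ne_zero ((map_ne_zero _).2 (inv_ne_zero hc)) (q.right_ne_zero f hf hf0)

theorem exists_left_eq_smul [CompleteSpace H] {p q : Frame L Φ} (h : p.carrier ≤ q.carrier) :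
    ∃ c : ℂ, c ≠ 0 ∧ ∀ x ∈ p.carrier, q.left x = c • p.left x := by
  obtain ⟨f, hf, hf0⟩ := exists_orthogonal_minus_ne_zero_of_mem_famF q.mem
  obtain ⟨x, hx, hx0⟩ := exists_ne_zero_of_mem_famF p.mem
  have inner_ne_zero : ⟪q.right f, q.right f⟫_ℂ ≠ 0 :=
    inner_self_ne_zero.2 (q.right_ne_zero f hf hf0)
  have left_eq : ∀ x ∈ p.carrier, q.left x =
      ((⟪q.right f, q.right f⟫_ℂ)⁻¹ * ⟪p.right f, q.right f⟫_ℂ) • p.left x := by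
    intro x hx
    have rankOne_eq : rankOne (q.left x) (q.right f) = rankOne (p.left x) (p.right f) := by
      rw [← q.apply_rankOne x (h hx) f hf,
        p.apply_rankOne x hx f (Submodule.orthogonal_le (minus_mono h) hf)]
    have := DFunLike.congr_fun rankOne_eq (q.right f)
    rw [rankOne_apply, rankOne_apply] at this
    rw [mul_smul, ← this, inv_smul_smul₀ inner_ne_zero]
  refine ⟨_, fun hc => ?_, left_eq⟩
  exact q.left_ne_zero x (h hx) hx0 (by rw [left_eq x hx, hc, zero_smul])

/-- Two frames are compatible if their carriers are comparable and their left maps agree on the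
smaller of the two. -/
def Compat (p q : Frame L Φ) : Prop :=
  Comparable' p.carrier q.carrier ∧ ∀ x ∈ p.carrier, x ∈ q.carrier → p.left x = q.left x

namespace Compat

theorem refl (p : Frame L Φ) : Compat p p :=
  ⟨Or.inl le_rfl, fun _ _ _ => rfl⟩

theorem symm {p q : Frame L Φ} (h : Compat p q) : Compat q p :=
  ⟨h.1.symm, fun x hq hp => (h.2 x hp hq).symm⟩

theorem exists_ne_zero {p q : Frame L Φ} (h : Compat p q) :
    ∃ x ∈ p.carrier, x ∈ q.carrier ∧ x ≠ 0 := by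
  obtain ⟨x, hx, hx0⟩ := exists_ne_zero_of_mem_famF p.mem
  obtain ⟨y, hy, hy0⟩ := exists_ne_zero_of_mem_famF q.mem
  rcases h.1 with hpq | hqp
  · exact ⟨x, hx, hpq hx, hx0⟩
  · exact ⟨y, hqp hy, hy, hy0⟩

theorem right_eq {p q : Frame L Φ} (h : Compat p q) {f : H} (hp : f ∈ (minus L p.carrier)ᗮ)
    (hq : f ∈ (minus L q.carrier)ᗮ) : p.right f = q.right f := by
  obtain ⟨x, hxp, hxq, hx0⟩ := h.exists_ne_zero
  have rankOne_eq : rankOne (p.left x) (p.right f) = rankOne (p.left x) (q.right f) := by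
    rw [← p.apply_rankOne x hxp f hp, q.apply_rankOne x hxq f hq, h.2 x hxp hxq]
  exact ext_inner_right ℂ fun z =>
    smul_left_injective ℂ (p.left_ne_zero x hxp hx0) (DFunLike.congr_fun rankOne_eq z)

variable [CompleteSpace H]

theorem of_le_of_left_eq {p q : Frame L Φ} (h : p.carrier ≤ q.carrier) {x : H}
    (hx : x ∈ p.carrier) (hx0 : x ≠ 0) (hleft : p.left x = q.left x) : Compat p q := by
  obtain ⟨c, -, hc⟩ := exists_left_eq_smul h
  have c_eq_one : c = 1 := by
    refine smul_left_injective ℂ (p.left_ne_zero x hx hx0)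
      (?_ : c • p.left x = (1 : ℂ) • p.left x)
    rw [one_smul, ← hc x hx, hleft]
  exact ⟨Or.inl h, fun y hy _ => by rw [hc y hy, c_eq_one, one_smul]⟩

theorem of_left_eq {p q : Frame L Φ} (h : Comparable' p.carrier q.carrier) {x : H}
    (hp : x ∈ p.carrier) (hq : x ∈ q.carrier) (hx0 : x ≠ 0) (hleft : p.left x = q.left x) :
    Compat p q :=
  h.elim (fun hpq => of_le_of_left_eq hpq hp hx0 hleft)
    fun hqp => (of_le_of_left_eq hqp hq hx0 hleft.symm).symm

theorem trans_of_comparable {p q r : Frame L Φ} (hpq : Compat p q) (hqr : Compat q r)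
    (hpr : Comparable' p.carrier r.carrier) : Compat p r := by
  obtain ⟨x, hxp, hxq, hxr, hx0⟩ :
      ∃ x, x ∈ p.carrier ∧ x ∈ q.carrier ∧ x ∈ r.carrier ∧ x ≠ 0 := by
    obtain ⟨x, hx, hx0⟩ := exists_ne_zero_of_mem_famF p.mem
    obtain ⟨y, hy, hy0⟩ := exists_ne_zero_of_mem_famF q.mem
    obtain ⟨z, hz, hz0⟩ := exists_ne_zero_of_mem_famF r.mem
    rcases hpq.1 with h₁ | h₁ <;> rcases hqr.1 with h₂ | h₂
    · exact ⟨x, hx, h₁ hx, h₂ (h₁ hx), hx0⟩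
    · rcases hpr with h₃ | h₃
      · exact ⟨x, hx, h₁ hx, h₃ hx, hx0⟩
      · exact ⟨z, h₃ hz, h₂ hz, hz, hz0⟩
    · exact ⟨y, h₁ hy, hy, h₂ hy, hy0⟩
    · exact ⟨z, h₁ (h₂ hz), h₂ hz, hz, hz0⟩
  exact of_left_eq hpr hxp hxr hx0 ((hpq.2 x hxp hxq).trans (hqr.2 x hxq hxr))

end Compat

theorem exists_compat [CompleteSpace H] {K : Submodule ℂ H}
    (hK : ∃ q : Frame L Φ, q.carrier = K) (p : Frame L Φ) (h : Comparable' p.carrier K) :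
    ∃ q : Frame L Φ, q.carrier = K ∧ Compat p q := by
  obtain ⟨q, rfl⟩ := hK
  obtain ⟨c, hc0, hc⟩ :
      ∃ c : ℂ, c ≠ 0 ∧ ∀ x ∈ p.carrier, x ∈ q.carrier → p.left x = c • q.left x := by
    rcases h with h | h
    · obtain ⟨c, hc0, hc⟩ := exists_left_eq_smul h
      exact ⟨c⁻¹, inv_ne_zero hc0, fun x hx _ => by rw [hc x hx, inv_smul_smul₀ hc0]⟩
    · obtain ⟨c, hc0, hc⟩ := exists_left_eq_smul h
      exact ⟨c, hc0, fun x _ hx => hc x hx⟩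
  exact ⟨q.rescale c hc0, rfl, h, hc⟩

end Frame

theorem RankPreserving.prod_eq_one_of_crown [CompleteSpace H] (hrank : RankPreserving L Φ)
    (hlin : IsLinearOnAlg L Φ) {m : ℕ} {q r : Fin (m + 1) → Frame L Φ} {a : Fin (m + 1) → ℂ}
    (hle : ∀ k, (q k).carrier ≤ (r k).carrier)
    (hle_succ : ∀ k, (q (k + 1)).carrier ≤ (r k).carrier)
    (hq : Pairwise fun k l => (q k).carrier ⟂ (q l).carrier)
    (hr : Pairwise fun k l => (minus L (r k).carrier)ᗮ ⟂ (minus L (r l).carrier)ᗮ)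
    (hleft : ∀ k, ∀ x ∈ (q k).carrier, (r k).left x = (q k).left x)
    (hleft_succ : ∀ k, ∀ x ∈ (q (k + 1)).carrier, (r k).left x = a k • (q (k + 1)).left x) :
    ∏ k, a k = 1 := by
  choose x hx hx0 using fun k => exists_ne_zero_of_mem_famF (q k).mem
  choose f hf hf0 using fun k => exists_orthogonal_minus_ne_zero_of_mem_famF (r k).mem
  refine hrank.prod_eq_one hlin (x := x) (f := f) (u := fun k => (q k).left (x k))
    (v := fun k => (r k).right (f k)) ?_ ?_ (fun k => ?_) (fun k => ?_) (fun k => ?_) fun k => ?_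
  · exact linearIndependent_of_ne_zero_of_inner_eq_zero hx0 fun k l hkl =>
      Submodule.isOrtho_iff_inner_eq.1 (hq hkl) _ (hx k) _ (hx l)
  · exact linearIndependent_of_ne_zero_of_inner_eq_zero hf0 fun k l hkl =>
      Submodule.isOrtho_iff_inner_eq.1 (hr hkl) _ (hf k) _ (hf l)
  · exact rankOne_mem_algL (hle k (hx k)) (hf k)
  · exact rankOne_mem_algL (hle_succ k (hx (k + 1))) (hf k)
  · rw [(r k).apply_rankOne _ (hle k (hx k)) _ (hf k), hleft k _ (hx k)]
  · rw [(r k).apply_rankOne _ (hle_succ k (hx (k + 1))) _ (hf k), hleft_succ k _ (hx (k + 1))]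

end Frames

section Flatness

open Frame SimpleGraph

variable {H : Type*} [NormedAddCommGroup H] [InnerProductSpace ℂ H]

/-- The graph on the frames of `Φ` whose edges are the pairs of compatible frames. -/
def compatGraph (L : Set (Submodule ℂ H)) (Φ : (H →L[ℂ] H) → (H →L[ℂ] H)) :
    SimpleGraph (Frame L Φ) :=
  SimpleGraph.fromRel Compat

variable {L : Set (Submodule ℂ H)} {Φ : (H →L[ℂ] H) → (H →L[ℂ] H)}

theorem edist_compatGraph_le_one_iff {p q : Frame L Φ} :
    (compatGraph L Φ).edist p q ≤ 1 ↔ Compat p q := by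
  rw [edist_le_one_iff_adj_or_eq, compatGraph, fromRel_adj]
  constructor
  · rintro (⟨-, h | h⟩ | rfl)
    exacts [h, h.symm, Compat.refl p]
  · exact fun h => (eq_or_ne p q).elim Or.inr fun hne => Or.inl ⟨hne, Or.inl h⟩

/-- `p 0, …, p n` is a shortest path of compatible frames whose end frames are comparable but not
compatible, and no such path is shorter than `n`. By symmetry the carrier of `p 0` is taken to be
the smaller one. -/
structure IsMinimalBadPath (n : ℕ) (p : ℕ → Frame L Φ) : Prop where
  compat_succ : ∀ i < n, Compat (p i) (p (i + 1))
  edist_eq : (compatGraph L Φ).edist (p 0) (p n) = n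
  le : (p 0).carrier ≤ (p n).carrier
  not_compat : ¬ Compat (p 0) (p n)
  compat_of_edist_lt : ∀ a b : Frame L Φ, (compatGraph L Φ).edist a b < n →
    Comparable' a.carrier b.carrier → Compat a b

namespace IsMinimalBadPath

variable {n i j : ℕ} {p : ℕ → Frame L Φ}

theorem edist_le (h : IsMinimalBadPath n p) (hij : i ≤ j) (hj : j ≤ n) :
    (compatGraph L Φ).edist (p i) (p j) ≤ (j - i : ℕ) := by
  induction j, hij using Nat.le_induction with
  | base => simp only [edist_self, zero_le]
  | succ j hij ih =>
    calc (compatGraph L Φ).edist (p i) (p (j + 1))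
        ≤ (compatGraph L Φ).edist (p i) (p j) + (compatGraph L Φ).edist (p j) (p (j + 1)) :=
          SimpleGraph.edist_triangle
      _ ≤ (j - i : ℕ) + 1 :=
          add_le_add (ih (by lia)) (edist_compatGraph_le_one_iff.2 (h.compat_succ j hj))
      _ = (j + 1 - i : ℕ) := by rw [Nat.succ_sub hij]; rfl

theorem le_add_of_edist_le (h : IsMinimalBadPath n p) (hij : i ≤ j) (hj : j ≤ n) {d : ℕ}
    (hd : (compatGraph L Φ).edist (p i) (p j) ≤ d) : j ≤ i + d := by
  have : (n : ℕ∞) ≤ (i - 0 : ℕ) + (d + (n - j : ℕ)) :=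
    calc (n : ℕ∞) = (compatGraph L Φ).edist (p 0) (p n) := h.edist_eq.symm
      _ ≤ (compatGraph L Φ).edist (p 0) (p i) + ((compatGraph L Φ).edist (p i) (p j) +
            (compatGraph L Φ).edist (p j) (p n)) :=
          SimpleGraph.edist_triangle.trans (by gcongr; exact SimpleGraph.edist_triangle)
      _ ≤ _ := add_le_add (h.edist_le (Nat.zero_le i) (hij.trans hj))
          (add_le_add hd (h.edist_le hj le_rfl))
  have : n ≤ i - 0 + (d + (n - j)) := by exact_mod_cast this
  lia

theorem not_comparable (h : IsMinimalBadPath n p) (hij : i + 2 ≤ j) (hj : j ≤ n)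
    (hends : j < n + i) : ¬ Comparable' (p i).carrier (p j).carrier := by
  intro hc
  have hcompat : Compat (p i) (p j) :=
    h.compat_of_edist_lt _ _ ((h.edist_le (by lia) hj).trans_lt (by norm_cast; lia)) hc
  have := h.le_add_of_edist_le (d := 1) (by lia) hj (edist_compatGraph_le_one_iff.2 hcompat)
  lia

variable [CompleteSpace H]

theorem three_le (h : IsMinimalBadPath n p) : 3 ≤ n := by
  by_contra! hn
  apply h.not_compat
  rcases (by lia : n ≤ 1 ∨ n = 2) with hn | rfl
  · exact edist_compatGraph_le_one_iff.1 (h.edist_eq.trans_le (by exact_mod_cast hn))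
  · exact (h.compat_succ 0 (by lia)).trans_of_comparable (h.compat_succ 1 (by lia)) (Or.inl h.le)

/-- The two parts say that the path zigzags: a monotone stretch of length two would join
non-neighbours. -/
theorem le_succ_and_succ_le (h : IsMinimalBadPath n p) (hi : i < n) :
    (Even i → (p i).carrier ≤ (p (i + 1)).carrier) ∧
      (Odd i → (p (i + 1)).carrier ≤ (p i).carrier) := by
  have hn := h.three_le
  induction i with
  | zero =>
    refine ⟨fun _ => ?_, fun h0 => absurd h0 (by decide)⟩
    refine (h.compat_succ 0 hi).1.resolve_right fun h₁ => ?_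
    exact h.not_comparable (i := 1) (j := n) hn le_rfl (by lia) (Or.inl (h₁.trans h.le))
  | succ i ih =>
    obtain ⟨up, down⟩ := ih (by lia)
    have hnot := h.not_comparable (i := i) (j := i + 2) le_rfl (by lia) (by lia)
    have hstep := (h.compat_succ (i + 1) hi).1
    rw [Nat.even_add_one, Nat.not_even_iff_odd, Nat.odd_add_one, Nat.not_odd_iff_even]
    exact ⟨fun hodd => hstep.resolve_right fun h₁ => hnot (Or.inr (h₁.trans (down hodd))),
      fun heven => hstep.resolve_left fun h₁ => hnot (Or.inl ((up heven).trans h₁))⟩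

theorem le_succ (h : IsMinimalBadPath n p) {k : ℕ} (hk : 2 * k < n) :
    (p (2 * k)).carrier ≤ (p (2 * k + 1)).carrier :=
  (h.le_succ_and_succ_le hk).1 (even_two_mul k)

theorem succ_le (h : IsMinimalBadPath n p) {k : ℕ} (hk : 2 * k + 1 < n) :
    (p (2 * k + 2)).carrier ≤ (p (2 * k + 1)).carrier :=
  (h.le_succ_and_succ_le hk).2 (odd_two_mul_add_one k)

theorem odd (h : IsMinimalBadPath n p) : Odd n := by
  by_contra hn
  obtain ⟨k, rfl⟩ : ∃ k, n = 2 * k + 2 := by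
    have := h.three_le
    exact ⟨n / 2 - 1, by grind⟩
  have := h.three_le
  exact h.not_comparable (i := 0) (j := 2 * k + 1) (by lia) (by lia) (by lia)
    (Or.inl (h.le.trans (h.succ_le (by lia))))

/-- Otherwise a frame at `K` would provide a shortcut between two non-adjacent edges. -/
theorem not_comparable_of_comparable (h : IsMinimalBadPath n p) {K : Submodule ℂ H}
    (hK : ∃ q : Frame L Φ, q.carrier = K) (hij : i + 2 ≤ j) (hj : j < n)
    (hi : Comparable' (p i).carrier K) (hi' : Comparable' (p (i + 1)).carrier K)
    (hj' : Comparable' (p j).carrier K) : ¬ Comparable' (p (j + 1)).carrier K := by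
  intro hj''
  obtain ⟨q, rfl, hq⟩ := exists_compat hK (p i) hi
  have hq₁ : Compat (p (i + 1)) q := (h.compat_succ i (by lia)).symm.trans_of_comparable hq hi'
  have edist_lt : (compatGraph L Φ).edist q (p j) < n :=
    calc (compatGraph L Φ).edist q (p j)
        ≤ (compatGraph L Φ).edist q (p (i + 1)) + (compatGraph L Φ).edist (p (i + 1)) (p j) :=
          SimpleGraph.edist_triangle
      _ ≤ 1 + (j - (i + 1) : ℕ) :=
          add_le_add (edist_compatGraph_le_one_iff.2 hq₁.symm) (h.edist_le (by lia) hj.le)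
      _ < n := by norm_cast; lia
  have hqj : Compat q (p j) := h.compat_of_edist_lt _ _ edist_lt hj'.symm
  have hqj' : Compat q (p (j + 1)) := hqj.trans_of_comparable (h.compat_succ j hj) hj''.symm
  have edist_le_two : (compatGraph L Φ).edist (p i) (p (j + 1)) ≤ (1 + 1 : ℕ) :=
    SimpleGraph.edist_triangle.trans
      (add_le_add (edist_compatGraph_le_one_iff.2 hq) (edist_compatGraph_le_one_iff.2 hqj'))
  have := h.le_add_of_edist_le (by lia) hj edist_le_two
  lia

theorem isOrtho_carrier (h : IsMinimalBadPath n p) (hL : IsCSL L)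
    (hF : ∀ N ∈ famF L, ∃ q : Frame L Φ, q.carrier = N) {k l : ℕ} (hkl : k < l)
    (hl : 2 * l < n) : (p (2 * k)).carrier ⟂ (p (2 * l)).carrier := by
  have mem_L (i : ℕ) : (p i).carrier ∈ L := (p i).mem.1
  refine isOrtho_of_commute_projOf (hL.isClosed _ (mem_L _)) (hL.isClosed _ (mem_L _))
    (hL.commute_projOf (mem_L _) (mem_L _)) ?_
  by_contra hne
  have hK := hL.inf_mem_famF (p (2 * k)).mem (p (2 * l)).mem hne
  exact h.not_comparable_of_comparable (hF _ hK) (by lia : 2 * k + 2 ≤ 2 * l) hl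
    (Or.inr inf_le_left) (Or.inr (inf_le_left.trans (h.le_succ (by lia))))
    (Or.inr inf_le_right) (Or.inr (inf_le_right.trans (h.le_succ hl)))

theorem isOrtho_orthogonal_minus (h : IsMinimalBadPath n p) (hL : IsCSL L)
    (hF : ∀ N ∈ famF L, ∃ q : Frame L Φ, q.carrier = N) {k l : ℕ} (hkl : k < l)
    (hl : 2 * l < n) :
    (minus L (p (2 * k + 1)).carrier)ᗮ ⟂ (minus L (p (2 * l + 1)).carrier)ᗮ := by
  refine isOrtho_of_commute_projOf (Submodule.isClosed_orthogonal _)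
    (Submodule.isClosed_orthogonal _) (commute_projOf_orthogonal (isClosed_minus L _)
      (isClosed_minus L _) (hL.commute_projOf (hL.minus_mem _) (hL.minus_mem _))) ?_
  by_contra hne
  have hK := hL.closedJoin_pair_mem_famF (p (2 * k + 1)).mem (p (2 * l + 1)).mem hne
  have hk_le := le_closedJoin (Set.mem_insert (p (2 * k + 1)).carrier {(p (2 * l + 1)).carrier})
  have hl_le : (p (2 * l + 1)).carrier ≤
      closedJoin {(p (2 * k + 1)).carrier, (p (2 * l + 1)).carrier} :=
    le_closedJoin (Set.mem_insert_of_mem _ rfl)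
  exact h.not_comparable_of_comparable (hF _ hK) (by lia : 2 * k + 2 ≤ 2 * l) hl
    (Or.inl ((h.le_succ (by lia)).trans hk_le)) (Or.inl hk_le)
    (Or.inl ((h.le_succ hl).trans hl_le)) (Or.inl hl_le)

end IsMinimalBadPath

variable [CompleteSpace H]

/-- The even frames of a minimal bad path and the odd ones form a crown, around which the holonomy
is the scalar relating the two end frames. -/
theorem not_isMinimalBadPath (hL : IsCSL L) (hlin : IsLinearOnAlg L Φ)
    (hrank : RankPreserving L Φ) (hF : ∀ N ∈ famF L, ∃ q : Frame L Φ, q.carrier = N) (n : ℕ)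
    (p : ℕ → Frame L Φ) : ¬ IsMinimalBadPath n p := by
  intro h
  obtain ⟨m, rfl⟩ := h.odd
  obtain ⟨c, -, hc⟩ := exists_left_eq_smul h.le
  have val_succ {k : Fin (m + 1)} (hk : k ≠ Fin.last m) : ((k + 1 : Fin (m + 1)) : ℕ) = k + 1 := by
    rw [Fin.val_add_one, if_neg hk]
  have hle_succ (k : Fin (m + 1)) :
      (p (2 * (k + 1 : Fin (m + 1)))).carrier ≤ (p (2 * k + 1)).carrier := by
    rcases eq_or_ne k (Fin.last m) with rfl | hk
    · rw [Fin.last_add_one]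
      exact h.le
    · rw [val_succ hk]
      exact h.succ_le (by have := Fin.val_lt_last hk; lia)
  have hprod := hrank.prod_eq_one_of_crown hlin (q := fun k : Fin (m + 1) => p (2 * k))
    (r := fun k => p (2 * k + 1)) (a := fun k => if k = Fin.last m then c else 1)
    (fun k => h.le_succ (by lia)) hle_succ ?_ ?_ (fun k x hx => ?_) fun k x hx => ?_
  · rw [Finset.prod_ite_eq' Finset.univ, if_pos (Finset.mem_univ _)] at hprod
    exact h.not_compat ⟨Or.inl h.le, fun x hx _ => by rw [hc x hx, hprod, one_smul]⟩
  · exact fun k l hkl => hkl.lt_or_gt.elim (fun hkl => h.isOrtho_carrier hL hF hkl (by lia))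
      fun hlk => (h.isOrtho_carrier hL hF hlk (by lia)).symm
  · exact fun k l hkl => hkl.lt_or_gt.elim
      (fun hkl => h.isOrtho_orthogonal_minus hL hF hkl (by lia))
      fun hlk => (h.isOrtho_orthogonal_minus hL hF hlk (by lia)).symm
  · exact ((h.compat_succ (2 * k) (by lia)).2 x hx (h.le_succ (by lia) hx)).symm
  · rcases eq_or_ne k (Fin.last m) with rfl | hk
    · rw [Fin.last_add_one] at hx ⊢
      rw [if_pos rfl]
      exact hc x hx
    · have hx' := hle_succ k hx
      simp only [val_succ hk, if_neg hk, one_smul] at hx ⊢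
      exact (h.compat_succ (2 * k + 1) (by have := Fin.val_lt_last hk; lia)).2 x hx' hx

theorem compat_of_reachable (hL : IsCSL L) (hlin : IsLinearOnAlg L Φ)
    (hrank : RankPreserving L Φ) (hF : ∀ N ∈ famF L, ∃ q : Frame L Φ, q.carrier = N)
    {a b : Frame L Φ} (hab : (compatGraph L Φ).Reachable a b)
    (hc : Comparable' a.carrier b.carrier) : Compat a b := by
  obtain ⟨n, hn⟩ := ENat.ne_top_iff_exists.1 (edist_ne_top_iff_reachable.2 hab)
  induction n using Nat.strong_induction_on generalizing a b with
  | _ n ih =>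
  wlog hle : a.carrier ≤ b.carrier generalizing a b
  · exact (this hab.symm hc.symm (hn.trans edist_comm) (hc.resolve_left hle)).symm
  by_contra hbad
  obtain ⟨w, hw⟩ := exists_walk_of_edist_eq_coe hn.symm
  refine not_isMinimalBadPath hL hlin hrank hF n w.getVert ⟨fun i hi => ?_, ?_, ?_, ?_, ?_⟩
  · exact edist_compatGraph_le_one_iff.1 (edist_le_one_iff_adj_or_eq.2
      (Or.inl (w.adj_getVert_succ (hw ▸ hi))))
  · rw [Walk.getVert_zero, ← hw, Walk.getVert_length, hw, hn]
  · rwa [Walk.getVert_zero, ← hw, Walk.getVert_length]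
  · rwa [Walk.getVert_zero, ← hw, Walk.getVert_length]
  · intro q r hqr hqr'
    obtain ⟨d, hd⟩ := ENat.ne_top_iff_exists.1 hqr.ne_top
    exact ih d (by rw [← hd] at hqr; exact_mod_cast hqr)
      (edist_ne_top_iff_reachable.1 hqr.ne_top) hqr' hd

/-- The graph on `famF L` whose edges are the pairs of comparable subspaces. -/
def comparabilityGraph (L : Set (Submodule ℂ H)) : SimpleGraph (famF L) :=
  SimpleGraph.fromRel fun M N => Comparable' (M : Submodule ℂ H) N

theorem exists_frame_reachable (hF : ∀ N ∈ famF L, ∃ q : Frame L Φ, q.carrier = N)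
    {M N : famF L} (h : (comparabilityGraph L).Reachable M N) {p : Frame L Φ}
    (hp : p.carrier = M) : ∃ q : Frame L Φ, q.carrier = N ∧ (compatGraph L Φ).Reachable p q := by
  obtain ⟨w⟩ := h
  induction w generalizing p with
  | nil => exact ⟨p, hp, Reachable.refl p⟩
  | @cons M K N hadj _ ih =>
    have hcomp : Comparable' p.carrier K := hp ▸ hadj.2.elim id Or.symm
    obtain ⟨q, hq, hpq⟩ := exists_compat (hF _ K.2) p hcomp
    obtain ⟨r, hr, hqr⟩ := ih hq
    exact ⟨r, hr, (edist_ne_top_iff_reachable.1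
      (ne_top_of_le_ne_top (by decide) (edist_compatGraph_le_one_iff.2 hpq))).trans hqr⟩

/-- A choice of a frame at every member of `famF L`, compatible along all comparable pairs. -/
structure IsCoherent (P : famF L → Frame L Φ) : Prop where
  carrier_eq : ∀ M, (P M).carrier = M
  compat : ∀ M N : famF L, Comparable' (M : Submodule ℂ H) N → Compat (P M) (P N)

theorem exists_isCoherent (hL : IsCSL L) (hlin : IsLinearOnAlg L Φ)
    (hrank : RankPreserving L Φ) (hcons : ∀ N ∈ famF L, Consistent L Φ N) :
    ∃ P : famF L → Frame L Φ, IsCoherent P := by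
  have hF : ∀ N ∈ famF L, ∃ q : Frame L Φ, q.carrier = N :=
    fun N hN => (hcons N hN).exists_frame hlin hrank hN
  let root (C : (comparabilityGraph L).ConnectedComponent) : famF L := Quot.out C
  choose base hbase using fun C => hF (root C) (root C).2
  have reachable_root (M : famF L) : (comparabilityGraph L).Reachable
      (root ((comparabilityGraph L).connectedComponentMk M)) M :=
    ConnectedComponent.exact (Quot.out_eq _)
  choose P hP hreach using fun M => exists_frame_reachable hF (reachable_root M) (hbase _)
  refine ⟨P, hP, fun M N hMN => ?_⟩
  have same_component : (comparabilityGraph L).connectedComponentMk M =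
      (comparabilityGraph L).connectedComponentMk N := by
    rcases eq_or_ne M N with rfl | hne
    · rfl
    · exact ConnectedComponent.sound (Adj.reachable ⟨hne, Or.inl hMN⟩)
  refine compat_of_reachable hL hlin hrank hF ((hreach M).symm.trans ?_) (by rwa [hP, hP])
  rw [same_component]
  exact hreach N

end Flatness

section Gluing

variable {R E F ι : Type*} [Ring R] [AddCommGroup E] [Module R E] [AddCommGroup F] [Module R F]
  {S : ι → Submodule R E} {P : ι → E →ₗ[R] E} {T : ι → E →ₗ[R] F}

theorem sum_apply_eq_zero_of_sum_eq_zero (hP : ∀ i, LinearMap.IsProj (S i) (P i))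
    (hPS : ∀ i j, ∀ x ∈ S j, P i x ∈ S j)
    (hT : ∀ i j x, x ∈ S i → x ∈ S j → T i x = T j x) (s : Finset ι) {x : ι → E}
    (hx : ∀ i ∈ s, x i ∈ S i) (hsum : ∑ i ∈ s, x i = 0) : ∑ i ∈ s, T i (x i) = 0 := by
  classical
  induction s using Finset.induction_on generalizing x with
  | empty => exact Finset.sum_empty
  | insert a s ha ih =>
    rw [Finset.sum_insert ha] at hsum ⊢
    obtain ⟨hxa, hxs⟩ := Finset.forall_mem_insert _ _ _ |>.1 hx
    have sum_proj : x a + ∑ i ∈ s, P a (x i) = 0 := by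
      simpa only [map_add, map_sum, map_zero, (hP a).map_id _ hxa] using congrArg (P a) hsum
    have sum_apply_proj : T a (x a) + ∑ i ∈ s, T i (P a (x i)) = 0 := by
      rw [← map_zero (T a), ← sum_proj, map_add, map_sum]
      exact congrArg _ (Finset.sum_congr rfl fun i hi =>
        hT i a _ (hPS a i _ (hxs i hi)) ((hP a).map_mem _))
    have sum_apply_sub : ∑ i ∈ s, T i (x i - P a (x i)) = 0 := by
      refine ih (fun i hi => (S i).sub_mem (hxs i hi) (hPS a i _ (hxs i hi))) ?_
      rw [Finset.sum_sub_distrib, sub_eq_zero]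
      exact add_left_cancel (hsum.trans sum_proj.symm)
    simp only [map_sub, Finset.sum_sub_distrib, sub_eq_zero] at sum_apply_sub
    rw [sum_apply_sub, sum_apply_proj]

theorem exists_linearPMap_of_isProj (hP : ∀ i, LinearMap.IsProj (S i) (P i))
    (hPS : ∀ i j, ∀ x ∈ S j, P i x ∈ S j)
    (hT : ∀ i j x, x ∈ S i → x ∈ S j → T i x = T j x) :
    ∃ U : E →ₗ.[R] F, ∀ i, ∀ x ∈ S i, ∃ hx : x ∈ U.domain, U ⟨x, hx⟩ = T i x := by
  let g : Submodule R (E × F) := ⨆ i, (S i).map (LinearMap.id.prod (T i))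
  have single_valued : ∀ y ∈ g, y.1 = 0 → y.2 = 0 := by
    intro y hy hy0
    obtain ⟨y, hyS, rfl⟩ := (Submodule.mem_iSup_iff_exists_finsupp _ _).1 hy
    have mem_and_eq (i : ι) : (y i).1 ∈ S i ∧ T i (y i).1 = (y i).2 := by
      obtain ⟨z, hz, hzy⟩ := hyS i
      exact hzy ▸ ⟨hz, rfl⟩
    rw [Finsupp.sum, Prod.fst_sum] at hy0
    rw [Finsupp.sum, Prod.snd_sum, ← sum_apply_eq_zero_of_sum_eq_zero hP hPS hT y.support
      (fun i _ => (mem_and_eq i).1) hy0]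
    exact Finset.sum_congr rfl fun i _ => (mem_and_eq i).2.symm
  refine ⟨g.toLinearPMap, fun i x hx => ?_⟩
  have mem_graph : (x, T i x) ∈ g.toLinearPMap.graph := by
    rw [Submodule.toLinearPMap_graph_eq g single_valued]
    exact Submodule.mem_iSup_of_mem i ⟨x, hx, rfl⟩
  obtain ⟨⟨y, hy⟩, rfl, hTy⟩ := (LinearPMap.mem_graph_iff _).1 mem_graph
  exact ⟨hy, hTy⟩

end Gluing

namespace IsCoherent

variable {H : Type*} [NormedAddCommGroup H] [InnerProductSpace ℂ H]
  {L : Set (Submodule ℂ H)} {Φ : (H →L[ℂ] H) → (H →L[ℂ] H)} {P : famF L → Frame L Φ}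

theorem apply_rankOne (hP : IsCoherent P) (M : famF L) {x f : H} (hx : x ∈ (M : Submodule ℂ H))
    (hf : f ∈ (minus L (M : Submodule ℂ H))ᗮ) :
    Φ (rankOne x f) = rankOne ((P M).left x) ((P M).right f) :=
  (P M).apply_rankOne x (by rwa [hP.carrier_eq]) f (by rwa [hP.carrier_eq])

theorem left_eq_of_le (hP : IsCoherent P) {M N : famF L} (h : M ≤ N) {x : H}
    (hx : x ∈ (M : Submodule ℂ H)) : (P M).left x = (P N).left x :=
  (hP.compat M N (Or.inl h)).2 x (by rwa [hP.carrier_eq]) (by rw [hP.carrier_eq]; exact h hx)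

theorem right_eq_of_le (hP : IsCoherent P) {M N : famF L} (h : M ≤ N) {f : H}
    (hf : f ∈ (minus L (N : Submodule ℂ H))ᗮ) : (P M).right f = (P N).right f :=
  (hP.compat M N (Or.inl h)).right_eq
    (by rw [hP.carrier_eq]; exact Submodule.orthogonal_le (minus_mono h) hf)
    (by rwa [hP.carrier_eq])

theorem left_eq (hP : IsCoherent P) (hL : IsSubspaceLattice L) {M N : famF L} {x : H}
    (hM : x ∈ (M : Submodule ℂ H)) (hN : x ∈ (N : Submodule ℂ H)) :
    (P M).left x = (P N).left x := by
  rcases eq_or_ne x 0 with rfl | hx0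
  · rw [map_zero, map_zero]
  let K : famF L := ⟨M ⊓ N, hL.inf_mem_famF M.2 N.2 (Submodule.ne_bot_iff _ |>.2
    ⟨x, ⟨hM, hN⟩, hx0⟩)⟩
  have hKM : K ≤ M := inf_le_left (a := (M : Submodule ℂ H))
  have hKN : K ≤ N := inf_le_right (a := (M : Submodule ℂ H))
  rw [← hP.left_eq_of_le hKM ⟨hM, hN⟩, hP.left_eq_of_le hKN ⟨hM, hN⟩]

theorem right_eq (hP : IsCoherent P) (hL : IsSubspaceLattice L) {M N : famF L} {f : H}
    (hM : f ∈ (minus L (M : Submodule ℂ H))ᗮ) (hN : f ∈ (minus L (N : Submodule ℂ H))ᗮ) :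
    (P M).right f = (P N).right f := by
  rcases eq_or_ne f 0 with rfl | hf0
  · rw [map_zero, map_zero]
  have hK : closedJoin {(M : Submodule ℂ H), (N : Submodule ℂ H)} ∈ famF L :=
    hL.closedJoin_pair_mem_famF M.2 N.2 (Submodule.ne_bot_iff _ |>.2 ⟨f, ⟨hM, hN⟩, hf0⟩)
  have hMK : M ≤ ⟨_, hK⟩ := le_closedJoin (Set.mem_insert (M : Submodule ℂ H) _)
  have hNK : N ≤ ⟨_, hK⟩ :=
    le_closedJoin (Set.mem_insert_of_mem (M : Submodule ℂ H) (Set.mem_singleton _))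
  have hfK : f ∈ (minus L (closedJoin {(M : Submodule ℂ H), (N : Submodule ℂ H)}))ᗮ :=
    orthogonal_minus_inf_le hL ⟨hM, hN⟩
  rw [hP.right_eq_of_le hMK hfK, hP.right_eq_of_le hNK hfK]

variable [CompleteSpace H]

theorem exists_left_linearPMap (hP : IsCoherent P) (hL : IsCSL L) :
    ∃ U : H →ₗ.[ℂ] H, ∀ M : famF L, ∀ x ∈ (M : Submodule ℂ H),
      ∃ hx : x ∈ U.domain, U ⟨x, hx⟩ = (P M).left x := by
  have closed (M : famF L) : IsClosed ((M : Submodule ℂ H) : Set H) := hL.isClosed _ M.2.1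
  exact exists_linearPMap_of_isProj (fun M => isProj_projOf (closed M))
    (fun M N _ hx => projOf_mem_of_commute (closed N) (hL.commute_projOf M.2.1 N.2.1) hx)
    fun _ _ _ => hP.left_eq hL.toIsSubspaceLattice

theorem exists_right_linearPMap (hP : IsCoherent P) (hL : IsCSL L) :
    ∃ V : H →ₗ.[ℂ] H, ∀ M : famF L, ∀ f ∈ (minus L (M : Submodule ℂ H))ᗮ,
      ∃ hf : f ∈ V.domain, V ⟨f, hf⟩ = (P M).right f := by
  refine exists_linearPMap_of_isProj
    (fun M => isProj_projOf (Submodule.isClosed_orthogonal _)) (fun M N _ hf => ?_)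
    fun _ _ _ => hP.right_eq hL.toIsSubspaceLattice
  exact projOf_mem_of_commute (Submodule.isClosed_orthogonal _)
    (commute_projOf_orthogonal (isClosed_minus L _) (isClosed_minus L _)
      (hL.commute_projOf (hL.minus_mem _) (hL.minus_mem _))) hf

end IsCoherent

theorem inner_apply_adjoint_of_forall_rankOne {H : Type*} [NormedAddCommGroup H]
    [InnerProductSpace ℂ H] [CompleteSpace H] [Small.{0} H] {L : Set (Submodule ℂ H)}
    {Φ : (H →L[ℂ] H) → (H →L[ℂ] H)} (hL : IsCSL L) (hcd : IsCompletelyDistributive L)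
    (hlin : IsLinearOnAlg L Φ) (hwot : WOTContinuousOn L Φ) {U V : H →ₗ.[ℂ] H}
    (hU : Dense (U.domain : Set H)) (hV : Dense (V.domain : Set H))
    (hdom : ∀ M ∈ famF L, M ≤ U.domain ∧ (minus L M)ᗮ ≤ V.domain)
    (hΦ : ∀ (x : U.domain) (f : V.domain), ∀ M ∈ famF L, (x : H) ∈ M → (f : H) ∈ (minus L M)ᗮ →
      Φ (rankOne (x : H) (f : H)) = rankOne (U x) (V f))
    {A : H →L[ℂ] H} (hA : A ∈ algL L) (h : V.adjoint.domain) (k : U.adjoint.domain) :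
    ⟪Φ A (h : H), (k : H)⟫_ℂ = ⟪A (V.adjoint h), U.adjoint k⟫_ℂ := by
  rw [← inner_conj_symm, ← inner_conj_symm (A _)]
  congr 1
  refine inner_apply_eq_of_forall_rankOne hL hcd hlin hwot (fun M hM x hx f hf => ?_) hA
  let x' : U.domain := ⟨x, (hdom M hM).1 hx⟩
  let f' : V.domain := ⟨f, (hdom M hM).2 hf⟩
  have hU_adjoint : ⟪(k : H), U x'⟫_ℂ = ⟪U.adjoint k, x⟫_ℂ :=
    ((LinearPMap.adjoint_isFormalAdjoint hU) k x').symm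
  have hV_adjoint : ⟪V f', (h : H)⟫_ℂ = ⟪f, V.adjoint h⟫_ℂ :=
    (LinearPMap.adjoint_isFormalAdjoint hV).symm f' h
  rw [hΦ x' f' M hM hx hf, rankOne_apply, rankOne_apply, inner_smul_right, inner_smul_right,
    hU_adjoint, hV_adjoint]

theorem stmt_14_general {H : Type*} [NormedAddCommGroup H] [InnerProductSpace ℂ H]
    [CompleteSpace H] [Small.{0} H]
    (L : Set (Submodule ℂ H)) (hL : IsCSL L) (hcd : IsCompletelyDistributive L)
    (Φ : (H →L[ℂ] H) → (H →L[ℂ] H)) (hlin : IsLinearOnAlg L Φ)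
    (hwot : WOTContinuousOn L Φ) (hrank : RankPreserving L Φ)
    (hcons : ∀ N ∈ famF L, Consistent L Φ N) :
    ∃ U V : H →ₗ.[ℂ] H,
      Dense (U.domain : Set H) ∧ Dense (V.domain : Set H) ∧
      (∀ (x : U.domain) (f : V.domain) (M : Submodule ℂ H), M ∈ famF L →
          (x : H) ∈ M → (f : H) ∈ (minus L M)ᗮ →
          Φ (rankOne (x : H) (f : H)) = rankOne (U x) (V f)) ∧
      (∀ A ∈ algL L, ∀ (h : V.adjoint.domain) (k : U.adjoint.domain),
          (inner ℂ (Φ A (h : H)) (k : H) : ℂ)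
            = inner ℂ (A ((V.adjoint h : H))) ((U.adjoint k : H))) := by
  obtain ⟨P, hP⟩ := exists_isCoherent hL hlin hrank hcons
  obtain ⟨U, hU⟩ := hP.exists_left_linearPMap hL
  obtain ⟨V, hV⟩ := hP.exists_right_linearPMap hL
  have hdom : ∀ M ∈ famF L, M ≤ U.domain ∧ (minus L M)ᗮ ≤ V.domain := fun M hM =>
    ⟨fun x hx => (hU ⟨M, hM⟩ x hx).1, fun f hf => (hV ⟨M, hM⟩ f hf).1⟩
  have hUd := hcd.dense_of_forall_famF_le hL.toIsSubspaceLattice fun M hM => (hdom M hM).1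
  have hVd := hcd.dense_of_forall_orthogonal_minus_le hL.toIsSubspaceLattice
    fun M hM => (hdom M hM).2
  have hΦ : ∀ (x : U.domain) (f : V.domain), ∀ M ∈ famF L, (x : H) ∈ M →
      (f : H) ∈ (minus L M)ᗮ → Φ (rankOne (x : H) (f : H)) = rankOne (U x) (V f) := by
    intro x f M hM hx hf
    rw [hP.apply_rankOne ⟨M, hM⟩ hx hf, ← (hU ⟨M, hM⟩ x hx).2, ← (hV ⟨M, hM⟩ f hf).2]
  exact ⟨U, V, hUd, hVd, hΦ, fun A hA h k =>
    inner_apply_adjoint_of_forall_rankOne hL hcd hlin hwot hUd hVd hdom hΦ hA h k⟩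

theorem stmt_14 {H : Type*} [NormedAddCommGroup H] [InnerProductSpace ℂ H]
    [CompleteSpace H] [TopologicalSpace.SeparableSpace H]
    (L : Set (Submodule ℂ H)) (hL : IsCSL L) (hcd : IsCompletelyDistributive L)
    (Φ : (H →L[ℂ] H) → (H →L[ℂ] H)) (hlin : IsLinearOnAlg L Φ)
    (hwot : WOTContinuousOn L Φ) (hrank : RankPreserving L Φ)
    (hcons : ∀ N ∈ famF L, Consistent L Φ N)
    (hirr : ∃ N ∈ famF L, GSet L N = famF L) :
    ∃ U V : H →ₗ.[ℂ] H,
      Dense (U.domain : Set H) ∧ Dense (V.domain : Set H) ∧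
      (∀ (x : U.domain) (f : V.domain) (M : Submodule ℂ H), M ∈ famF L →
          (x : H) ∈ M → (f : H) ∈ (minus L M)ᗮ →
          Φ (rankOne (x : H) (f : H)) = rankOne (U x) (V f)) ∧
      (∀ A ∈ algL L, ∀ (h : V.adjoint.domain) (k : U.adjoint.domain),
          (inner ℂ (Φ A (h : H)) (k : H) : ℂ)
            = inner ℂ (A ((V.adjoint h : H))) ((U.adjoint k : H))) := by
  have := small_of_separableSpace H
  exact stmt_14_general L hL hcd Φ hlin hwot hrank hcons
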